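/- arXiv:1707.07441 — 3 statements merged into one kernel-verified Lean document; each statement's English description precedes it below -/
import Mathlib

section
/- For all n ≥ 1, the random variable X_n is monotone with respect to the lexicographic order on paths: if p and q are paths with p ≤ q, then X_n(p) ≤ X_n(q). -/
noncomputable section
open Filter Topology Classical

/-- Lexicographic strict order on infinite paths. -/
def PathLt {N : ℕ} (p q : Fin N × (ℕ → Bool)) : Prop :=
  p.1 < q.1 ∨ (p.1 = q.1 ∧ ∃ n : ℕ, (∀ k < n, p.2 k = q.2 k) ∧ p.2 n = false ∧ q.2 n = true)

/-- Lexicographic strict order on positive edges (compared within a sphere `S(n)`). -/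
def EdgeLt {N : ℕ} (e f : Fin N × List Bool) : Prop :=
  e.1 < f.1 ∨ (e.1 = f.1 ∧ List.Lex (· < ·) e.2 f.2)

/-- `Y (i, v)` for an edge of `S (m+1)`: `Y_n(e) = Φ(e)/2 + ∑_{f ∈ S(n), f < e} Φ(f)`. -/
def Y {N : ℕ} (Φ : Fin N → List Bool → ℝ) (m : ℕ) (i : Fin N) (v : Fin m → Bool) : ℝ :=
  Φ i (List.ofFn v) / 2 +
    ∑ x : Fin N × (Fin m → Bool),
      if EdgeLt (x.1, List.ofFn x.2) (i, List.ofFn v) then Φ x.1 (List.ofFn x.2) else 0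

/-- `X_n(p) = Y_n(p^n)`, where `p^n = (p.1, [p.2 0, …, p.2 (n-2)])` is the `n`-th edge
of the path `p`; here `m = n - 1` is the word length. -/
def X {N : ℕ} (Φ : Fin N → List Bool → ℝ) (m : ℕ) (p : Fin N × (ℕ → Bool)) : ℝ :=
  Y Φ m p.1 (fun k => p.2 k.val)

/-!
Lay the edges of a sphere side by side in lexicographic order, the edge `e` being an interval of
length `Φ e`. Then `Y e` is the midpoint of the interval of `e`, and midpoints of disjoint
consecutive intervals are ordered like the intervals. Truncating a path to its `n`-th edge respects
the lexicographic orders, so `X_n` is a composition of two monotone maps.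
-/

/-- When `α` is linearly ordered, the midpoint of the interval occupied by `a` after laying
intervals of lengths `f x` end to end from `0` in increasing order of `x`. -/
def midpointSum {α 𝕜 : Type*} [Fintype α] [LT α] [DecidableLT α] [Semifield 𝕜]
    (f : α → 𝕜) (a : α) : 𝕜 :=
  f a / 2 + ∑ x with x < a, f x

lemma monotone_midpointSum {α 𝕜 : Type*} [Fintype α] [PartialOrder α] [DecidableLT α]
    [Semifield 𝕜] [LinearOrder 𝕜] [IsStrictOrderedRing 𝕜] {f : α → 𝕜}
    (hf : ∀ a, 0 ≤ f a) : Monotone (midpointSum f) := by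
  refine monotone_iff_forall_lt.2 fun a b hab => ?_
  have insert_subset : insert a ({x | x < a} : Finset α) ⊆ ({x | x < b} : Finset α) :=
    Finset.insert_subset (by simpa using hab)
      (Finset.monotone_filter_right _ fun _ _ hx => hx.trans hab)
  calc midpointSum f a
      ≤ f a + ∑ x with x < a, f x := add_le_add_left (half_le_self (hf a)) _
    _ = ∑ x ∈ insert a ({x | x < a} : Finset α), f x := by rw [Finset.sum_insert (by simp)]
    _ ≤ ∑ x with x < b, f x :=
      Finset.sum_le_sum_of_subset_of_nonneg insert_subset fun x _ _ => hf x
    _ ≤ midpointSum f b := le_add_of_nonneg_left (div_nonneg (hf b) zero_le_two)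

lemma monotone_piLex_comp_initialSeg {ι κ : Type*} [LinearOrder ι] [LinearOrder κ]
    {β : ι → Type*} [∀ i, PartialOrder (β i)] (f : κ ≤i ι) :
    Monotone fun x : Lex (∀ i, β i) => toLex fun k => ofLex x (f k) := by
  refine monotone_iff_forall_lt.2 ?_
  rintro x y ⟨i, agree, lt⟩
  by_cases hi : i ∈ Set.range f
  · obtain ⟨k, rfl⟩ := hi
    exact le_of_lt ⟨k, fun j hj => agree (f j) (f.lt_iff_lt.2 hj), lt⟩
  · have below (k : κ) : f k < i := not_le.1 fun h => hi (f.mem_range_of_le h)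
    exact le_of_eq (congrArg toLex (funext fun k => agree (f k) (below k)))

lemma monotone_prodLex_map_snd {α β γ : Type*} [Preorder α] [Preorder β] [Preorder γ]
    {g : β → γ} (hg : Monotone g) :
    Monotone fun p : α ×ₗ β => toLex ((ofLex p).1, g (ofLex p).2) := fun _ _ h =>
  Prod.Lex.toLex_le_toLex.2 <| (Prod.Lex.le_iff.1 h).imp_right <| And.imp_right (hg ·)

lemma ofFn_lex_ofFn_iff {α : Type*} [LT α] {m : ℕ} {v w : Fin m → α} :
    List.Lex (· < ·) (List.ofFn v) (List.ofFn w) ↔ toLex v < toLex w := by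
  change _ ↔ Pi.Lex (· < ·) (· < ·) v w
  induction m with
  | zero => simp [Pi.Lex]
  | succ m ih =>
    rw [← Fin.cons_self_tail v, ← Fin.cons_self_tail w, Fin.pi_lex_lt_cons_cons,
      List.ofFn_cons, List.ofFn_cons, List.cons_lex_cons_iff, ih]

section Edges

variable {N : ℕ}

lemma edgeLt_ofFn_iff {m : ℕ} {i j : Fin N} {v w : Fin m → Bool} :
    EdgeLt (i, List.ofFn v) (j, List.ofFn w) ↔ toLex (i, toLex v) < toLex (j, toLex w) := by
  rw [EdgeLt, ofFn_lex_ofFn_iff, Prod.Lex.toLex_lt_toLex]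

lemma pathLt_iff_toLex_lt {p q : Fin N × (ℕ → Bool)} :
    PathLt p q ↔ toLex (p.1, toLex p.2) < toLex (q.1, toLex q.2) := by
  simp only [PathLt, Prod.Lex.toLex_lt_toLex, ← Bool.lt_iff]
  rfl

/-- The `(m + 1)`-st edge `p^(m+1)` of the path `p`, as an element of the sphere `S(m+1)` with its
lexicographic order; the edges of `S(m+1)` are encoded by an initial edge and `m` turns. -/
def pathEdge (m : ℕ) (p : Fin N ×ₗ Lex (ℕ → Bool)) : Fin N ×ₗ Lex (Fin m → Bool) :=
  toLex ((ofLex p).1, toLex fun k => ofLex (ofLex p).2 k)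

lemma monotone_pathEdge (m : ℕ) : Monotone (pathEdge (N := N) m) :=
  let finInitialSeg : Fin m ≤i ℕ :=
    { Fin.valOrderEmb m |>.ltEmbedding with
      mem_range_of_rel' := fun k n hn => ⟨⟨n, hn.trans k.isLt⟩, rfl⟩ }
  monotone_prodLex_map_snd (monotone_piLex_comp_initialSeg finInitialSeg)

/-- The restriction of the 1-form `Φ` to the sphere `S(m+1)`. -/
def sphereMass (Φ : Fin N → List Bool → ℝ) (m : ℕ) (e : Fin N ×ₗ Lex (Fin m → Bool)) : ℝ :=
  Φ (ofLex e).1 (List.ofFn (ofLex (ofLex e).2))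

lemma Y_eq_midpointSum (Φ : Fin N → List Bool → ℝ) (m : ℕ) (i : Fin N) (v : Fin m → Bool) :
    Y Φ m i v = midpointSum (sphereMass Φ m) (toLex (i, toLex v)) := by
  simp only [Y, midpointSum, edgeLt_ofFn_iff, Finset.sum_filter]
  rfl

lemma X_eq_midpointSum (Φ : Fin N → List Bool → ℝ) (m : ℕ) (p : Fin N × (ℕ → Bool)) :
    X Φ m p = midpointSum (sphereMass Φ m) (pathEdge m (toLex (p.1, toLex p.2))) :=
  Y_eq_midpointSum Φ m p.1 _

theorem X_monotone_general {Φ : Fin N → List Bool → ℝ} (hΦ : ∀ i w, 0 ≤ Φ i w)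
    {p q : Fin N × (ℕ → Bool)} (hpq : PathLt p q ∨ p = q) (m : ℕ) : X Φ m p ≤ X Φ m q := by
  have toLex_le : toLex (p.1, toLex p.2) ≤ toLex (q.1, toLex q.2) := by
    rcases hpq with hlt | rfl
    · exact (pathLt_iff_toLex_lt.1 hlt).le
    · exact le_rfl
  rw [X_eq_midpointSum, X_eq_midpointSum]
  exact monotone_midpointSum (fun _ => hΦ _ _) (monotone_pathEdge m toLex_le)

end Edges

/-- **`X_n` is increasing for the lexicographic order on paths**: for all `n ≥ 1`,
if `p ≤ q` then `X_n(p) ≤ X_n(q)`. -/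
theorem X_monotone (N : ℕ) (hN : 1 ≤ N) (Φ : Fin N → List Bool → ℝ)
    (hpos : ∀ (i : Fin N) (w : List Bool), 0 < Φ i w)
    (hharm : ∀ (i : Fin N) (w : List Bool), Φ i w = Φ i (w ++ [false]) + Φ i (w ++ [true]))
    (p q : Fin N × (ℕ → Bool)) (hpq : PathLt p q ∨ p = q) :
    ∀ m : ℕ, X Φ m p ≤ X Φ m q :=
  X_monotone_general (fun i w => (hpos i w).le) hpq
end
end

section
/- Let π : ℝ → AddCircle ∂Φ be the quotient map and let X̄_∞ ⊆ AddCircle ∂Φ be the closure of ⋃_{p irrational} π([X^L_∞(p), X^R_∞(p)]), the union over all irrational paths p of the images of the closed real intervals [X^L_∞(p), X^R_∞(p)]. Then the complement (AddCircle ∂Φ) \ X̄_∞ is the union, over all complementary regions e, of the sets J_e, where J_e := π( (X^L_∞(∂^L e), X^R_∞(∂^R e)) ) for every edge-labelled region and every root region between i and i+1 with i + 1 ≤ N − 1, and J_e := π( (X^L_∞(∂^L e), X^R_∞(∂^R e) + ∂Φ) ) for the root region between N−1 and 0; moreover the sets J_e are pairwise disjoint. -/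
noncomputable section
open Filter Topology Classical

/-- The constant Boolean sequence `c^∞`. -/
def constSeq (c : Bool) : ℕ → Bool := fun _ => c

/-- The Boolean sequence `w ++ [b] ++ c^∞`. -/
def extendSeq (w : List Bool) (b c : Bool) : ℕ → Bool := fun n =>
  if h : n < w.length then w.get ⟨n, h⟩ else if n = w.length then b else c

/-- A path is rational iff its Boolean sequence is eventually constant. -/
def RationalPath {N : ℕ} (p : Fin N × (ℕ → Bool)) : Prop :=
  ∃ (c : Bool) (m : ℕ), ∀ n ≥ m, p.2 n = c

/-- `X_∞(p) = lim_n X_n(p)` (the limit exists for every path). -/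
def Xinf {N : ℕ} (Φ : Fin N → List Bool → ℝ) (p : Fin N × (ℕ → Bool)) : ℝ :=
  limUnder atTop (fun m => X Φ m p)

/-- `X^L_∞(p) = sup {X_∞(q) : q < p}`. -/
def XL {N : ℕ} (Φ : Fin N → List Bool → ℝ) (p : Fin N × (ℕ → Bool)) : ℝ :=
  sSup (Xinf Φ '' {q | PathLt q p})

/-- `X^R_∞(p) = inf {X_∞(q) : q > p}`. -/
def XR {N : ℕ} (Φ : Fin N → List Bool → ℝ) (p : Fin N × (ℕ → Bool)) : ℝ :=
  sInf (Xinf Φ '' {q | PathLt p q})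

/-- The cyclically next initial-edge index. -/
def nextIdx {N : ℕ} (hN : 1 ≤ N) (i : Fin N) : Fin N :=
  ⟨((i : ℕ) + 1) % N, Nat.mod_lt _ hN⟩

/-- The closed set `X̄_∞ ⊆ ℝ/∂Φℤ`: the closure of the union, over the irrational
paths `p`, of the images of the closed intervals `[X^L_∞(p), X^R_∞(p)]`. -/
def XbarInf {N : ℕ} (Φ : Fin N → List Bool → ℝ) :
    Set (AddCircle (∑ i : Fin N, Φ i [])) :=
  closure (⋃ p ∈ {p : Fin N × (ℕ → Bool) | ¬ RationalPath p},
    (fun x : ℝ => (x : AddCircle (∑ i : Fin N, Φ i []))) '' Set.Icc (XL Φ p) (XR Φ p))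

/-- The open interval `J_e ⊆ ℝ/∂Φℤ` of a complementary region: for an edge-labelled
region `(i, w)` it is the image of `(X^L_∞(∂^L(i,w)), X^R_∞(∂^R(i,w)))`; for a root
region between `i` and `i+1` with `i + 1 ≤ N − 1` it is the image of
`(X^L_∞((i, true^∞)), X^R_∞((i+1, false^∞)))`; and for the root region between `N−1`
and `0` it is the image of `(X^L_∞((N−1, true^∞)), X^R_∞((0, false^∞)) + ∂Φ)`. -/
def regionInterval {N : ℕ} (hN : 1 ≤ N) (Φ : Fin N → List Bool → ℝ) :
    (Fin N × List Bool) ⊕ Fin N → Set (AddCircle (∑ i : Fin N, Φ i []))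
  | Sum.inl e =>
      (fun x : ℝ => (x : AddCircle (∑ i : Fin N, Φ i []))) ''
        Set.Ioo (XL Φ (e.1, extendSeq e.2 false true)) (XR Φ (e.1, extendSeq e.2 true false))
  | Sum.inr i =>
      if (i : ℕ) + 1 < N then
        (fun x : ℝ => (x : AddCircle (∑ i : Fin N, Φ i []))) ''
          Set.Ioo (XL Φ (i, constSeq true)) (XR Φ (nextIdx hN i, constSeq false))
      else
        (fun x : ℝ => (x : AddCircle (∑ i : Fin N, Φ i []))) ''
          Set.Ioo (XL Φ (i, constSeq true))
            (XR Φ (nextIdx hN i, constSeq false) + ∑ i : Fin N, Φ i [])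

/-!
Lay out the edges of each sphere as consecutive intervals of lengths `Φ`, starting at `0`.
Harmonicity makes the intervals of the two children of an edge tile the interval of the edge, and
`X n p` is the midpoint of the interval of the `n`-th edge of `p`. The nested intervals of a path
`p` shrink to `[cutLeft p, cutRight p]`. These limit intervals are ordered like the paths and cover
`[0, ∂Φ)`. If `p` turns right infinitely often, irrational paths accumulate at `p` from the left, so
`XL p = cutLeft p`; symmetrically `XR p = cutRight p` if `p` turns left infinitely often.

On the universal cover the lifts of the paths are linearly ordered, and the two boundary paths of a
complementary region are consecutive there. Hence the open interval of a region meets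
`[cutLeft p, cutRight p]` only if `p` is one of its two boundary paths, which are rational, and the
intervals of different regions do not meet. Since each rational path is a boundary path, the regions
and the irrational paths together cover the circle up to the ends of the region intervals, which
are limits of values of `Xinf` at irrational paths.
-/

section Weights

variable {M : Type*} [AddCommMonoid M] {φ : List Bool → M}

/-- A weight on the vertices of a binary tree that is additive at every vertex: the restriction of
a harmonic 1-form to the tree hanging from one initial edge. -/
def IsHarmonic (φ : List Bool → M) : Prop :=
  ∀ w, φ w = φ (w ++ [false]) + φ (w ++ [true])

/-- The total weight of the words of the same length as `w` that precede `w` lexicographically,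
for a harmonic weight; it is encoded by recursion on the first letter of `w`. -/
def weightBefore (φ : List Bool → M) : List Bool → M
  | [] => 0
  | false :: w => weightBefore (fun v => φ (false :: v)) w
  | true :: w => φ [false] + weightBefore (fun v => φ (true :: v)) w

lemma weightBefore_append_false (φ : List Bool → M) (w : List Bool) :
    weightBefore φ (w ++ [false]) = weightBefore φ w := by
  induction w generalizing φ with
  | nil => rfl
  | cons b w ih => cases b <;> simp [weightBefore, ih]

lemma weightBefore_append_true (φ : List Bool → M) (w : List Bool) :
    weightBefore φ (w ++ [true]) = weightBefore φ w + φ (w ++ [false]) := by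
  induction w generalizing φ with
  | nil => simp [weightBefore]
  | cons b w ih => cases b <;> simp [weightBefore, ih, add_assoc]

lemma IsHarmonic.cons (hφ : IsHarmonic φ) (b : Bool) : IsHarmonic fun w => φ (b :: w) :=
  fun w => hφ (b :: w)

lemma sum_ofFn_succ (f : List Bool → M) (m : ℕ) :
    ∑ u : Fin (m + 1) → Bool, f (List.ofFn u) =
      ∑ u : Fin m → Bool, f (false :: List.ofFn u) +
        ∑ u : Fin m → Bool, f (true :: List.ofFn u) := by
  rw [← (Fin.consEquiv fun _ => Bool).sum_comp, Fintype.sum_prod_type, Fintype.sum_bool, add_comm]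
  simp [List.ofFn_succ]

lemma IsHarmonic.sum_ofFn (hφ : IsHarmonic φ) (m : ℕ) :
    ∑ u : Fin m → Bool, φ (List.ofFn u) = φ [] := by
  induction m generalizing φ with
  | zero => simp
  | succ m ih => rw [sum_ofFn_succ, ih (hφ.cons false), ih (hφ.cons true)]; exact (hφ []).symm

lemma IsHarmonic.sum_lt_eq_weightBefore (hφ : IsHarmonic φ) {m : ℕ} (v : Fin m → Bool) :
    (∑ u : Fin m → Bool, if List.ofFn u < List.ofFn v then φ (List.ofFn u) else 0) =
      weightBefore φ (List.ofFn v) := by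
  induction m generalizing φ with
  | zero => simp [weightBefore]
  | succ m ih =>
    rw [sum_ofFn_succ fun w => if w < List.ofFn v then φ w else 0, List.ofFn_succ]
    cases v 0 with
    | false =>
      simpa [weightBefore, List.cons_lt_cons_iff, Bool.lt_iff] using ih (hφ.cons false) _
    | true =>
      simp [weightBefore, List.cons_lt_cons_iff, ih (hφ.cons true), (hφ.cons false).sum_ofFn]

end Weights

lemma exists_sum_Iio_le_lt_sum_Iic {M : Type*} [AddCommMonoid M] [LinearOrder M] {n : ℕ}
    (a : Fin n → M) {x : M} (h0 : 0 ≤ x) (hx : x < ∑ i, a i) :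
    ∃ i, ∑ j ∈ Finset.Iio i, a j ≤ x ∧ x < ∑ j ∈ Finset.Iic i, a j := by
  induction n with
  | zero => exact absurd hx (by simpa using h0)
  | succ n ih =>
    rcases le_or_gt (∑ i : Fin n, a i.castSucc) x with hle | hlt
    · exact ⟨Fin.last n, by simpa using hle, by simpa [← Fin.top_eq_last] using hx⟩
    · obtain ⟨i, hi⟩ := ih _ hlt
      exact ⟨i.castSucc, by simpa [Fin.sum_Iio_castSucc, Fin.sum_Iic_castSucc] using hi⟩

lemma isMax_toLex_prodMk {α β : Type*} [Preorder α] [Preorder β] {a : α} {b : β}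
    (ha : IsMax a) (hb : IsMax b) : IsMax (toLex (a, b)) := by
  rw [isMax_iff_forall_not_lt, toLex.surjective.forall]
  rintro ⟨a', b'⟩ h
  rcases Prod.Lex.toLex_lt_toLex.1 h with h | ⟨-, h⟩
  exacts [ha.not_lt h, hb.not_lt h]

lemma isMin_toLex_prodMk {α β : Type*} [Preorder α] [Preorder β] {a : α} {b : β}
    (ha : IsMin a) (hb : IsMin b) : IsMin (toLex (a, b)) := by
  rw [isMin_iff_forall_not_lt, toLex.surjective.forall]
  rintro ⟨a', b'⟩ h
  rcases Prod.Lex.toLex_lt_toLex.1 h with h | ⟨-, h⟩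
  exacts [ha.not_lt h, hb.not_lt h]

lemma coe_mem_coe_image_iff {A : Type*} [AddCommGroup A] {T x : A} {S : Set A} :
    (x : AddCircle T) ∈ (fun y : A => (y : AddCircle T)) '' S ↔ ∃ k : ℤ, x - k • T ∈ S := by
  constructor
  · rintro ⟨y, hy, hyx⟩
    obtain ⟨k, hk⟩ := (AddCircle.coe_eq_zero_iff T (x := x - y)).1
      ((AddCircle.coe_sub T x y).trans (sub_eq_zero.2 hyx.symm))
    exact ⟨k, by rwa [hk, sub_sub_cancel]⟩
  · rintro ⟨k, hk⟩
    refine ⟨_, hk, ?_⟩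
    simp only [AddCircle.coe_sub, AddCircle.coe_zsmul, AddCircle.coe_period, smul_zero, sub_zero]

section EdgeIntervals

variable {N : ℕ} {Φ : Fin N → List Bool → ℝ}

/-- The left end of the interval of the edge `(i, w)`, when the edges of each sphere are laid out
as consecutive intervals of lengths `Φ`, starting at `0`. -/
def edgeLeft (Φ : Fin N → List Bool → ℝ) (i : Fin N) (w : List Bool) : ℝ :=
  ∑ j ∈ Finset.Iio i, Φ j [] + weightBefore (Φ i) w

/-- The right end of the interval of the edge `(i, w)`; see `edgeLeft`. -/
def edgeRight (Φ : Fin N → List Bool → ℝ) (i : Fin N) (w : List Bool) : ℝ :=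
  edgeLeft Φ i w + Φ i w

lemma edgeLeft_nil (Φ : Fin N → List Bool → ℝ) (i : Fin N) :
    edgeLeft Φ i [] = ∑ j ∈ Finset.Iio i, Φ j [] := by
  rw [edgeLeft, weightBefore, add_zero]

lemma edgeRight_nil (Φ : Fin N → List Bool → ℝ) (i : Fin N) :
    edgeRight Φ i [] = ∑ j ∈ Finset.Iic i, Φ j [] := by
  rw [edgeRight, edgeLeft_nil, Finset.Iic_eq_cons_Iio, Finset.sum_cons, add_comm]

lemma edgeLeft_append_false (i : Fin N) (w : List Bool) :
    edgeLeft Φ i (w ++ [false]) = edgeLeft Φ i w := by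
  rw [edgeLeft, weightBefore_append_false, edgeLeft]

lemma edgeRight_append_false (i : Fin N) (w : List Bool) :
    edgeRight Φ i (w ++ [false]) = edgeLeft Φ i (w ++ [true]) := by
  rw [edgeRight, edgeLeft_append_false, edgeLeft, edgeLeft, weightBefore_append_true, add_assoc]

lemma edgeRight_append_true (hΦ : ∀ i, IsHarmonic (Φ i)) (i : Fin N) (w : List Bool) :
    edgeRight Φ i (w ++ [true]) = edgeRight Φ i w := by
  rw [edgeRight, ← edgeRight_append_false, edgeRight, edgeRight, edgeLeft_append_false, hΦ i w,
    add_assoc]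

lemma edgeLeft_le_edgeRight (hΦ : ∀ i w, 0 ≤ Φ i w) (i : Fin N) (w : List Bool) :
    edgeLeft Φ i w ≤ edgeRight Φ i w :=
  le_add_of_nonneg_right (hΦ i w)

lemma edgeLeft_le_append (hΦ : ∀ i w, 0 ≤ Φ i w) (i : Fin N) (w : List Bool) (b : Bool) :
    edgeLeft Φ i w ≤ edgeLeft Φ i (w ++ [b]) := by
  cases b with
  | false => exact (edgeLeft_append_false i w).ge
  | true =>
    rw [← edgeRight_append_false, ← edgeLeft_append_false i w]
    exact edgeLeft_le_edgeRight hΦ i _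

lemma edgeRight_nil_le_edgeLeft_nil (hΦ : ∀ i w, 0 ≤ Φ i w) {i j : Fin N} (h : i < j) :
    edgeRight Φ i [] ≤ edgeLeft Φ j [] := by
  rw [edgeRight_nil, edgeLeft_nil]
  exact Finset.sum_le_sum_of_subset_of_nonneg
    (fun k hk => Finset.mem_Iio.2 ((Finset.mem_Iic.1 hk).trans_lt h)) fun k _ _ => hΦ k []

lemma edgeLeft_nil_nonneg (hΦ : ∀ i w, 0 ≤ Φ i w) (i : Fin N) : 0 ≤ edgeLeft Φ i [] := by
  rw [edgeLeft_nil]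
  exact Finset.sum_nonneg fun j _ => hΦ j []

lemma edgeRight_nil_le_sum (hΦ : ∀ i w, 0 ≤ Φ i w) (i : Fin N) :
    edgeRight Φ i [] ≤ ∑ j, Φ j [] := by
  rw [edgeRight_nil]
  exact Finset.sum_le_sum_of_subset_of_nonneg (Finset.subset_univ _) fun k _ _ => hΦ k []

lemma Y_eq_midpoint (hΦ : ∀ i, IsHarmonic (Φ i)) {m : ℕ} (i : Fin N) (v : Fin m → Bool) :
    Y Φ m i v = midpoint ℝ (edgeLeft Φ i (List.ofFn v)) (edgeRight Φ i (List.ofFn v)) := by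
  have hbefore (j : Fin N) :
      (∑ u : Fin m → Bool,
        if EdgeLt (j, List.ofFn u) (i, List.ofFn v) then Φ j (List.ofFn u) else 0) =
        (if j < i then Φ j [] else 0) + if j = i then weightBefore (Φ i) (List.ofFn v) else 0 := by
    rcases lt_trichotomy j i with h | rfl | h
    · simp [EdgeLt, h, h.ne, (hΦ j).sum_ofFn]
    · simp [EdgeLt, (hΦ j).sum_lt_eq_weightBefore]
    · simp [EdgeLt, h.not_gt, h.ne']
  rw [Y, Fintype.sum_prod_type]
  simp only [hbefore, Finset.sum_add_distrib, Finset.sum_ite_eq', Finset.mem_univ, if_true,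
    ← Finset.sum_filter, Finset.filter_gt_eq_Iio]
  rw [edgeRight, edgeLeft, midpoint_eq_smul_add, invOf_eq_inv, smul_eq_mul]
  ring

end EdgeIntervals

/-- A nonnegative harmonic 1-form on the tree with `N` initial edges. -/
structure IsNonnegHarmonic {N : ℕ} (Φ : Fin N → List Bool → ℝ) : Prop where
  nonneg : ∀ i w, 0 ≤ Φ i w
  harmonic : ∀ i, IsHarmonic (Φ i)

section Cuts

variable {N : ℕ} {Φ : Fin N → List Bool → ℝ}

lemma edgeRight_append_le (hΦ : IsNonnegHarmonic Φ) (i : Fin N) (w : List Bool) (b : Bool) :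
    edgeRight Φ i (w ++ [b]) ≤ edgeRight Φ i w := by
  rw [← edgeRight_append_true hΦ.harmonic i w]
  cases b with
  | false =>
    rw [edgeRight_append_false]
    exact edgeLeft_le_edgeRight hΦ.nonneg i _
  | true => exact le_rfl

lemma exists_append_mem_Icc (hΦ : ∀ i, IsHarmonic (Φ i)) {i : Fin N} {w : List Bool} {x : ℝ}
    (hx : x ∈ Set.Icc (edgeLeft Φ i w) (edgeRight Φ i w)) :
    ∃ b, x ∈ Set.Icc (edgeLeft Φ i (w ++ [b])) (edgeRight Φ i (w ++ [b])) := by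
  rcases le_total x (edgeLeft Φ i (w ++ [true])) with h | h
  · exact ⟨false, (edgeLeft_append_false i w).trans_le hx.1,
      h.trans_eq (edgeRight_append_false i w).symm⟩
  · exact ⟨true, h, hx.2.trans_eq (edgeRight_append_true hΦ i w).symm⟩

/-- The word of the first `m` letters of `s`. -/
def initialWord (s : ℕ → Bool) (m : ℕ) : List Bool :=
  List.ofFn fun k : Fin m => s k

lemma initialWord_succ (s : ℕ → Bool) (m : ℕ) :
    initialWord s (m + 1) = initialWord s m ++ [s m] := by
  rw [initialWord, List.ofFn_succ_last]
  rfl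

lemma initialWord_congr {s t : ℕ → Bool} {m : ℕ} (h : ∀ k < m, s k = t k) :
    initialWord s m = initialWord t m :=
  congrArg List.ofFn (funext fun k => h k k.2)

/-- The left end of the intersection of the nested intervals of the edges of the path `p`. -/
def cutLeft (Φ : Fin N → List Bool → ℝ) (p : Fin N × (ℕ → Bool)) : ℝ :=
  ⨆ m, edgeLeft Φ p.1 (initialWord p.2 m)

/-- The right end of the intersection of the nested intervals of the edges of the path `p`. -/
def cutRight (Φ : Fin N → List Bool → ℝ) (p : Fin N × (ℕ → Bool)) : ℝ :=
  ⨅ m, edgeRight Φ p.1 (initialWord p.2 m)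

lemma monotone_edgeLeft_initialWord (hΦ : ∀ i w, 0 ≤ Φ i w) (p : Fin N × (ℕ → Bool)) :
    Monotone fun m => edgeLeft Φ p.1 (initialWord p.2 m) :=
  monotone_nat_of_le_succ fun m => by
    rw [initialWord_succ]
    exact edgeLeft_le_append hΦ _ _ _

lemma antitone_edgeRight_initialWord (hΦ : IsNonnegHarmonic Φ) (p : Fin N × (ℕ → Bool)) :
    Antitone fun m => edgeRight Φ p.1 (initialWord p.2 m) :=
  antitone_nat_of_succ_le fun m => by
    rw [initialWord_succ]
    exact edgeRight_append_le hΦ _ _ _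

lemma edgeLeft_initialWord_le_edgeRight (hΦ : IsNonnegHarmonic Φ) (p : Fin N × (ℕ → Bool))
    (m n : ℕ) : edgeLeft Φ p.1 (initialWord p.2 m) ≤ edgeRight Φ p.1 (initialWord p.2 n) :=
  (monotone_edgeLeft_initialWord hΦ.nonneg p (le_max_left m n)).trans <|
    (edgeLeft_le_edgeRight hΦ.nonneg _ _).trans <|
      antitone_edgeRight_initialWord hΦ p (le_max_right m n)

lemma bddAbove_edgeLeft_initialWord (hΦ : IsNonnegHarmonic Φ) (p : Fin N × (ℕ → Bool)) :
    BddAbove (Set.range fun m => edgeLeft Φ p.1 (initialWord p.2 m)) :=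
  ⟨_, Set.forall_mem_range.2 fun m => edgeLeft_initialWord_le_edgeRight hΦ p m 0⟩

lemma bddBelow_edgeRight_initialWord (hΦ : IsNonnegHarmonic Φ) (p : Fin N × (ℕ → Bool)) :
    BddBelow (Set.range fun m => edgeRight Φ p.1 (initialWord p.2 m)) :=
  ⟨_, Set.forall_mem_range.2 fun m => edgeLeft_initialWord_le_edgeRight hΦ p 0 m⟩

lemma edgeLeft_le_cutLeft (hΦ : IsNonnegHarmonic Φ) (p : Fin N × (ℕ → Bool)) (m : ℕ) :
    edgeLeft Φ p.1 (initialWord p.2 m) ≤ cutLeft Φ p :=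
  le_ciSup (bddAbove_edgeLeft_initialWord hΦ p) m

lemma cutRight_le_edgeRight (hΦ : IsNonnegHarmonic Φ) (p : Fin N × (ℕ → Bool)) (m : ℕ) :
    cutRight Φ p ≤ edgeRight Φ p.1 (initialWord p.2 m) :=
  ciInf_le (bddBelow_edgeRight_initialWord hΦ p) m

lemma cutLeft_le_cutRight (hΦ : IsNonnegHarmonic Φ) (p : Fin N × (ℕ → Bool)) :
    cutLeft Φ p ≤ cutRight Φ p :=
  ciSup_le fun m => le_ciInf fun n => edgeLeft_initialWord_le_edgeRight hΦ p m n

lemma cutLeft_nonneg (hΦ : IsNonnegHarmonic Φ) (p : Fin N × (ℕ → Bool)) : 0 ≤ cutLeft Φ p :=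
  (edgeLeft_nil_nonneg hΦ.nonneg p.1).trans (edgeLeft_le_cutLeft hΦ p 0)

lemma cutRight_le_sum (hΦ : IsNonnegHarmonic Φ) (p : Fin N × (ℕ → Bool)) :
    cutRight Φ p ≤ ∑ i, Φ i [] :=
  (cutRight_le_edgeRight hΦ p 0).trans (edgeRight_nil_le_sum hΦ.nonneg p.1)

lemma tendsto_edgeLeft_initialWord (hΦ : IsNonnegHarmonic Φ) (p : Fin N × (ℕ → Bool)) :
    Tendsto (fun m => edgeLeft Φ p.1 (initialWord p.2 m)) atTop (𝓝 (cutLeft Φ p)) :=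
  tendsto_atTop_ciSup (monotone_edgeLeft_initialWord hΦ.nonneg p)
    (bddAbove_edgeLeft_initialWord hΦ p)

lemma tendsto_edgeRight_initialWord (hΦ : IsNonnegHarmonic Φ) (p : Fin N × (ℕ → Bool)) :
    Tendsto (fun m => edgeRight Φ p.1 (initialWord p.2 m)) atTop (𝓝 (cutRight Φ p)) :=
  tendsto_atTop_ciInf (antitone_edgeRight_initialWord hΦ p) (bddBelow_edgeRight_initialWord hΦ p)

lemma Xinf_eq_midpoint (hΦ : IsNonnegHarmonic Φ) (p : Fin N × (ℕ → Bool)) :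
    Xinf Φ p = midpoint ℝ (cutLeft Φ p) (cutRight Φ p) := by
  refine Tendsto.limUnder_eq ?_
  simp only [X, Y_eq_midpoint hΦ.harmonic]
  exact (tendsto_edgeLeft_initialWord hΦ p).midpoint (tendsto_edgeRight_initialWord hΦ p)

lemma Xinf_mem_Icc (hΦ : IsNonnegHarmonic Φ) (p : Fin N × (ℕ → Bool)) :
    Xinf Φ p ∈ Set.Icc (cutLeft Φ p) (cutRight Φ p) := by
  have h := cutLeft_le_cutRight hΦ p
  rw [Xinf_eq_midpoint hΦ]
  exact ⟨left_le_midpoint.2 h, midpoint_le_right.2 h⟩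

lemma cutRight_le_cutLeft_of_pathLt (hΦ : IsNonnegHarmonic Φ) {p q : Fin N × (ℕ → Bool)}
    (h : PathLt p q) : cutRight Φ p ≤ cutLeft Φ q := by
  obtain ⟨i, s⟩ := p
  obtain ⟨j, t⟩ := q
  rcases h with hij | ⟨rfl : i = j, n, hst, hs : s n = false, ht : t n = true⟩
  · exact (cutRight_le_edgeRight hΦ (i, s) 0).trans <|
      (edgeRight_nil_le_edgeLeft_nil hΦ.nonneg hij).trans (edgeLeft_le_cutLeft hΦ (j, t) 0)
  · calc cutRight Φ (i, s)
        ≤ edgeRight Φ i (initialWord s (n + 1)) := cutRight_le_edgeRight hΦ (i, s) (n + 1)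
      _ = edgeLeft Φ i (initialWord t (n + 1)) := by
        rw [initialWord_succ, initialWord_succ, hs, ht, initialWord_congr hst,
          edgeRight_append_false]
      _ ≤ cutLeft Φ (i, t) := edgeLeft_le_cutLeft hΦ (i, t) (n + 1)

lemma exists_path_mem_Icc (hΦ : ∀ i, IsHarmonic (Φ i)) {x : ℝ}
    (hx : x ∈ Set.Ico 0 (∑ i, Φ i [])) :
    ∃ p, x ∈ Set.Icc (cutLeft Φ p) (cutRight Φ p) := by
  obtain ⟨i, hi⟩ := exists_sum_Iio_le_lt_sum_Iic _ hx.1 hx.2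
  rw [← edgeLeft_nil, ← edgeRight_nil] at hi
  have hchild (w : List Bool) : ∃ b, x ∈ Set.Icc (edgeLeft Φ i w) (edgeRight Φ i w) →
      x ∈ Set.Icc (edgeLeft Φ i (w ++ [b])) (edgeRight Φ i (w ++ [b])) := by
    by_cases hw : x ∈ Set.Icc (edgeLeft Φ i w) (edgeRight Φ i w)
    · exact (exists_append_mem_Icc hΦ hw).imp fun _ hb _ => hb
    · exact ⟨false, fun h => absurd h hw⟩
  choose b hb using hchild
  let word : ℕ → List Bool := Nat.rec [] fun _ w => w ++ [b w]
  have hword (m : ℕ) : initialWord (fun n => b (word n)) m = word m := by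
    induction m with
    | zero => rfl
    | succ m ih => rw [initialWord_succ, ih]
  have hmem (m : ℕ) : x ∈ Set.Icc (edgeLeft Φ i (word m)) (edgeRight Φ i (word m)) := by
    induction m with
    | zero => exact ⟨hi.1, hi.2.le⟩
    | succ m ih => exact hb _ ih
  refine ⟨(i, fun n => b (word n)), ciSup_le fun m => ?_, le_ciInf fun m => ?_⟩
  · rw [hword]; exact (hmem m).1
  · rw [hword]; exact (hmem m).2

end Cuts

section IrrationalPaths

variable {N : ℕ} {Φ : Fin N → List Bool → ℝ} {p : Fin N × (ℕ → Bool)}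

lemma exists_irrational_eq_of_lt (i : Fin N) (s : ℕ → Bool) (n : ℕ) :
    ∃ t, ¬ RationalPath (i, t) ∧ ∀ k < n, t k = s k := by
  refine ⟨fun k => if k < n then s k else k.bodd, ?_, fun k hk => if_pos hk⟩
  rintro ⟨c, m, hm⟩
  have hbodd (k : ℕ) (hk : m + n ≤ k) : k.bodd = c := by
    simpa [show ¬ k < n by omega] using hm k (by omega)
  have hsucc := hbodd (m + n + 1) (by omega)
  rw [Nat.bodd_succ, hbodd (m + n) le_rfl] at hsucc
  exact Bool.not_ne_self c hsucc

lemma exists_irrational_pathLt {n : ℕ} (hn : p.2 n = true) :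
    ∃ t, ¬ RationalPath (p.1, t) ∧ PathLt (p.1, t) p ∧ ∀ k < n, t k = p.2 k := by
  obtain ⟨t, ht, h⟩ := exists_irrational_eq_of_lt p.1 (Function.update p.2 n false) (n + 1)
  have hlt (k : ℕ) (hk : k < n) : t k = p.2 k := by
    rw [h k (by omega), Function.update_of_ne hk.ne]
  exact ⟨t, ht, .inr ⟨rfl, n, hlt, by simp [h n], hn⟩, hlt⟩

lemma exists_irrational_pathGt {n : ℕ} (hn : p.2 n = false) :
    ∃ t, ¬ RationalPath (p.1, t) ∧ PathLt p (p.1, t) ∧ ∀ k < n, t k = p.2 k := by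
  obtain ⟨t, ht, h⟩ := exists_irrational_eq_of_lt p.1 (Function.update p.2 n true) (n + 1)
  have hlt (k : ℕ) (hk : k < n) : t k = p.2 k := by
    rw [h k (by omega), Function.update_of_ne hk.ne]
  exact ⟨t, ht, .inr ⟨rfl, n, fun k hk => (hlt k hk).symm, hn, by simp [h n]⟩, hlt⟩

lemma frequently_eq_of_irrational (hp : ¬ RationalPath p) (b : Bool) :
    ∃ᶠ n in atTop, p.2 n = b := by
  intro h
  obtain ⟨m, hm⟩ := eventually_atTop.1 h
  exact hp ⟨!b, m, fun n hn => Bool.eq_not.2 (hm n hn)⟩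

lemma isLUB_Xinf_irrational_pathLt (hΦ : IsNonnegHarmonic Φ)
    (hp : ∃ᶠ n in atTop, p.2 n = true) :
    IsLUB (Xinf Φ '' {q | PathLt q p ∧ ¬ RationalPath q}) (cutLeft Φ p) := by
  refine ⟨Set.forall_mem_image.2 fun q hq =>
    (Xinf_mem_Icc hΦ q).2.trans (cutRight_le_cutLeft_of_pathLt hΦ hq.1),
    fun u hu => ciSup_le fun m => ?_⟩
  obtain ⟨n, hmn, hn⟩ := frequently_atTop.1 hp m
  obtain ⟨t, htirr, htlt, ht⟩ := exists_irrational_pathLt hn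
  calc edgeLeft Φ p.1 (initialWord p.2 m)
      = edgeLeft Φ p.1 (initialWord t m) := by
        rw [initialWord_congr fun k hk => ht k (hk.trans_le hmn)]
    _ ≤ cutLeft Φ (p.1, t) := edgeLeft_le_cutLeft hΦ (p.1, t) m
    _ ≤ Xinf Φ (p.1, t) := (Xinf_mem_Icc hΦ _).1
    _ ≤ u := hu ⟨_, ⟨htlt, htirr⟩, rfl⟩

lemma isGLB_Xinf_irrational_pathGt (hΦ : IsNonnegHarmonic Φ)
    (hp : ∃ᶠ n in atTop, p.2 n = false) :
    IsGLB (Xinf Φ '' {q | PathLt p q ∧ ¬ RationalPath q}) (cutRight Φ p) := by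
  refine ⟨Set.forall_mem_image.2 fun q hq =>
    (cutRight_le_cutLeft_of_pathLt hΦ hq.1).trans (Xinf_mem_Icc hΦ q).1,
    fun u hu => le_ciInf fun m => ?_⟩
  obtain ⟨n, hmn, hn⟩ := frequently_atTop.1 hp m
  obtain ⟨t, htirr, htgt, ht⟩ := exists_irrational_pathGt hn
  calc u ≤ Xinf Φ (p.1, t) := hu ⟨_, ⟨htgt, htirr⟩, rfl⟩
    _ ≤ cutRight Φ (p.1, t) := (Xinf_mem_Icc hΦ _).2
    _ ≤ edgeRight Φ p.1 (initialWord t m) := cutRight_le_edgeRight hΦ (p.1, t) m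
    _ = edgeRight Φ p.1 (initialWord p.2 m) := by
        rw [initialWord_congr fun k hk => ht k (hk.trans_le hmn)]

lemma XL_eq_cutLeft (hΦ : IsNonnegHarmonic Φ) (hp : ∃ᶠ n in atTop, p.2 n = true) :
    XL Φ p = cutLeft Φ p := by
  have hlub := isLUB_Xinf_irrational_pathLt hΦ hp
  obtain ⟨n, hn⟩ := hp.exists
  obtain ⟨t, -, ht, -⟩ := exists_irrational_pathLt hn
  refine IsLUB.csSup_eq ⟨Set.forall_mem_image.2 fun q hq => ?_, fun u hu => ?_⟩ ⟨_, _, ht, rfl⟩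
  · exact (Xinf_mem_Icc hΦ q).2.trans (cutRight_le_cutLeft_of_pathLt hΦ hq)
  · exact hlub.2 (upperBounds_mono_set (Set.image_mono fun q hq => hq.1) hu)

lemma XR_eq_cutRight (hΦ : IsNonnegHarmonic Φ) (hp : ∃ᶠ n in atTop, p.2 n = false) :
    XR Φ p = cutRight Φ p := by
  have hglb := isGLB_Xinf_irrational_pathGt hΦ hp
  obtain ⟨n, hn⟩ := hp.exists
  obtain ⟨t, -, ht, -⟩ := exists_irrational_pathGt hn
  refine IsGLB.csInf_eq ⟨Set.forall_mem_image.2 fun q hq => ?_, fun u hu => ?_⟩ ⟨_, _, ht, rfl⟩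
  · exact (cutRight_le_cutLeft_of_pathLt hΦ hq).trans (Xinf_mem_Icc hΦ q).1
  · exact hglb.2 (lowerBounds_mono_set (Set.image_mono fun q hq => hq.1) hu)

/-- The union of the intervals `[cutLeft p, cutRight p]` over the irrational paths `p`, whose image
in the circle is dense in `XbarInf`. -/
def irrationalCuts (Φ : Fin N → List Bool → ℝ) : Set ℝ :=
  ⋃ p ∈ {p : Fin N × (ℕ → Bool) | ¬ RationalPath p}, Set.Icc (cutLeft Φ p) (cutRight Φ p)

lemma Xinf_mem_irrationalCuts (hΦ : IsNonnegHarmonic Φ) (hp : ¬ RationalPath p) :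
    Xinf Φ p ∈ irrationalCuts Φ :=
  Set.mem_biUnion hp (Xinf_mem_Icc hΦ p)

lemma cutLeft_mem_closure_irrationalCuts (hΦ : IsNonnegHarmonic Φ)
    (hp : ∃ᶠ n in atTop, p.2 n = true) : cutLeft Φ p ∈ closure (irrationalCuts Φ) := by
  obtain ⟨n, hn⟩ := hp.exists
  obtain ⟨t, htirr, ht, -⟩ := exists_irrational_pathLt hn
  have h := (isLUB_Xinf_irrational_pathLt hΦ hp).mem_closure ⟨_, _, ⟨ht, htirr⟩, rfl⟩
  exact closure_mono (Set.forall_mem_image.2 fun q hq => Xinf_mem_irrationalCuts hΦ hq.2) h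

lemma cutRight_mem_closure_irrationalCuts (hΦ : IsNonnegHarmonic Φ)
    (hp : ∃ᶠ n in atTop, p.2 n = false) : cutRight Φ p ∈ closure (irrationalCuts Φ) := by
  obtain ⟨n, hn⟩ := hp.exists
  obtain ⟨t, htirr, ht, -⟩ := exists_irrational_pathGt hn
  have h := (isGLB_Xinf_irrational_pathGt hΦ hp).mem_closure ⟨_, _, ⟨ht, htirr⟩, rfl⟩
  exact closure_mono (Set.forall_mem_image.2 fun q hq => Xinf_mem_irrationalCuts hΦ hq.2) h

lemma XbarInf_eq_closure_image (hΦ : IsNonnegHarmonic Φ) :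
    XbarInf Φ = closure ((fun x : ℝ => (x : AddCircle (∑ i, Φ i []))) '' irrationalCuts Φ) := by
  rw [XbarInf, irrationalCuts, Set.image_iUnion₂]
  congr! 4 with p hp
  rw [XL_eq_cutLeft hΦ (frequently_eq_of_irrational hp true),
    XR_eq_cutRight hΦ (frequently_eq_of_irrational hp false)]

lemma coe_mem_XbarInf (hΦ : IsNonnegHarmonic Φ) {x : ℝ} (hx : x ∈ closure (irrationalCuts Φ)) :
    (x : AddCircle (∑ i, Φ i [])) ∈ XbarInf Φ := by
  rw [XbarInf_eq_closure_image hΦ]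
  exact image_closure_subset_closure_image (AddCircle.continuous_mk' _) ⟨x, hx, rfl⟩

end IrrationalPaths

section BoundaryPaths

variable {N : ℕ}

lemma extendSeq_of_lt_length {w : List Bool} {n : ℕ} (h : n < w.length) (b c : Bool) :
    extendSeq w b c n = w[n] := by
  simp [extendSeq, h]

lemma extendSeq_length (w : List Bool) (b c : Bool) : extendSeq w b c w.length = b := by
  simp [extendSeq]

lemma extendSeq_of_length_lt {w : List Bool} {n : ℕ} (h : w.length < n) (b c : Bool) :
    extendSeq w b c n = c := by
  simp [extendSeq, h.not_gt, h.ne']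

lemma length_le_of_extendSeq_eq {w v : List Bool} {c : Bool}
    (h : extendSeq w (!c) c = extendSeq v (!c) c) : w.length ≤ v.length := by
  by_contra! hlt
  have hval := congrFun h w.length
  rw [extendSeq_length, extendSeq_of_length_lt hlt] at hval
  exact Bool.not_ne_self c hval

lemma extendSeq_injective (c : Bool) : Function.Injective fun w => extendSeq w (!c) c := by
  intro w v h
  refine List.ext_getElem
    ((length_le_of_extendSeq_eq h).antisymm (length_le_of_extendSeq_eq h.symm)) fun n hw hv => ?_
  rw [← extendSeq_of_lt_length hw, ← extendSeq_of_lt_length hv]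
  exact congrFun h n

lemma extendSeq_ne_constSeq (w : List Bool) (c : Bool) : extendSeq w (!c) c ≠ constSeq c := by
  intro h
  have hval := congrFun h w.length
  rw [extendSeq_length] at hval
  exact Bool.not_ne_self c hval

lemma eq_extendSeq_initialWord {s : ℕ → Bool} {m : ℕ} {c : Bool} (h : ∀ n > m, s n = c) :
    s = extendSeq (initialWord s m) (s m) c := by
  funext n
  have hlen : (initialWord s m).length = m := List.length_ofFn
  rcases lt_trichotomy n m with hn | rfl | hn
  · rw [extendSeq_of_lt_length (by omega)]
    simp [initialWord]
  · simp [extendSeq, hlen]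
  · rw [extendSeq_of_length_lt (by omega), h n hn]

lemma eq_constSeq_or_exists_extendSeq {s : ℕ → Bool} {m : ℕ} {c : Bool} (h : ∀ n ≥ m, s n = c) :
    s = constSeq c ∨ ∃ w, s = extendSeq w (!c) c := by
  induction m with
  | zero => exact .inl (funext fun n => h n n.zero_le)
  | succ m ih =>
    by_cases hm : s m = c
    · refine ih fun n hn => ?_
      rcases hn.eq_or_lt with rfl | hlt
      exacts [hm, h n hlt]
    · rw [← Bool.eq_not.2 hm]
      exact .inr ⟨_, eq_extendSeq_initialWord h⟩

lemma toLex_lt_toLex_iff_exists_false_true {s t : ℕ → Bool} :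
    toLex s < toLex t ↔ ∃ n, (∀ k < n, s k = t k) ∧ s n = false ∧ t n = true :=
  exists_congr fun _ => and_congr_right' Bool.lt_iff

lemma toLex_extendSeq_covBy (w : List Bool) :
    toLex (extendSeq w false true) ⋖ toLex (extendSeq w true false) := by
  have hagree (k : ℕ) (hk : k < w.length) :
      extendSeq w false true k = extendSeq w true false k := by
    rw [extendSeq_of_lt_length hk, extendSeq_of_lt_length hk]
  refine ⟨toLex_lt_toLex_iff_exists_false_true.2
    ⟨w.length, hagree, extendSeq_length .., extendSeq_length ..⟩, fun s hls hsr => ?_⟩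
  obtain ⟨m, hlm, hl, hsm⟩ := toLex_lt_toLex_iff_exists_false_true.1 hls
  obtain ⟨n, hrn, hsn, hr⟩ := toLex_lt_toLex_iff_exists_false_true.1 hsr
  have hm : m ≤ w.length := by
    by_contra! h
    simp [extendSeq_of_length_lt h] at hl
  have hn : n ≤ w.length := by
    by_contra! h
    simp [extendSeq_of_length_lt h] at hr
  refine Bool.false_ne_true ?_
  rcases lt_trichotomy m n with h | rfl | h
  · rw [← hl, hagree m (h.trans_le hn), ← hrn m h, hsm]
  · rw [← hsn, hsm]
  · rw [← hsn, ← hlm n h, hagree n (h.trans_le hm), hr]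

lemma isMax_toLex_constSeq_true : IsMax (toLex (constSeq true)) :=
  isMax_top

lemma isMin_toLex_constSeq_false : IsMin (toLex (constSeq false)) :=
  isMin_bot

lemma covBy_nextIdx (hN : 1 ≤ N) {i : Fin N} (h : (i : ℕ) + 1 < N) : i ⋖ nextIdx hN i := by
  have hval : (nextIdx hN i : ℕ) = i + 1 := Nat.mod_eq_of_lt h
  constructor <;> grind

lemma isMin_nextIdx (hN : 1 ≤ N) {i : Fin N} (h : ¬ (i : ℕ) + 1 < N) : IsMin (nextIdx hN i) := by
  have hval : (nextIdx hN i : ℕ) = 0 := by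
    simp [nextIdx, show (i : ℕ) + 1 = N by omega]
  intro j _
  simp [Fin.le_def, hval]

lemma nextIdx_surjective (hN : 1 ≤ N) : Function.Surjective (nextIdx hN) := by
  intro i
  refine ⟨⟨(i + (N - 1)) % N, Nat.mod_lt _ hN⟩, Fin.ext ?_⟩
  simp only [nextIdx, Nat.mod_add_mod]
  rw [show (i : ℕ) + (N - 1) + 1 = i + N by omega, Nat.add_mod_right, Nat.mod_eq_of_lt i.2]

/-- The left boundary path `∂^L r` of a complementary region. -/
def leftBoundary : (Fin N × List Bool) ⊕ Fin N → Fin N × (ℕ → Bool)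
  | .inl e => (e.1, extendSeq e.2 false true)
  | .inr i => (i, constSeq true)

/-- The right boundary path `∂^R r` of a complementary region. -/
def rightBoundary (hN : 1 ≤ N) : (Fin N × List Bool) ⊕ Fin N → Fin N × (ℕ → Bool)
  | .inl e => (e.1, extendSeq e.2 true false)
  | .inr i => (nextIdx hN i, constSeq false)

lemma eventually_leftBoundary (r : (Fin N × List Bool) ⊕ Fin N) :
    ∀ᶠ n in atTop, (leftBoundary r).2 n = true := by
  rcases r with ⟨i, w⟩ | i
  · exact (eventually_gt_atTop w.length).mono fun n hn => extendSeq_of_length_lt hn false true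
  · exact .of_forall fun n => rfl

lemma eventually_rightBoundary (hN : 1 ≤ N) (r : (Fin N × List Bool) ⊕ Fin N) :
    ∀ᶠ n in atTop, (rightBoundary hN r).2 n = false := by
  rcases r with ⟨i, w⟩ | i
  · exact (eventually_gt_atTop w.length).mono fun n hn => extendSeq_of_length_lt hn true false
  · exact .of_forall fun n => rfl

lemma rationalPath_leftBoundary (r : (Fin N × List Bool) ⊕ Fin N) :
    RationalPath (leftBoundary r) :=
  ⟨true, eventually_atTop.1 (eventually_leftBoundary r)⟩

lemma rationalPath_rightBoundary (hN : 1 ≤ N) (r : (Fin N × List Bool) ⊕ Fin N) :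
    RationalPath (rightBoundary hN r) :=
  ⟨false, eventually_atTop.1 (eventually_rightBoundary hN r)⟩

lemma rightBoundary_ne_leftBoundary (hN : 1 ≤ N) (r r' : (Fin N × List Bool) ⊕ Fin N) :
    rightBoundary hN r ≠ leftBoundary r' := by
  intro h
  obtain ⟨n, hr, hl⟩ := ((eventually_rightBoundary hN r).and (eventually_leftBoundary r')).exists
  rw [h, hl] at hr
  exact Bool.true_eq_false_eq_False hr

lemma leftBoundary_injective : Function.Injective (leftBoundary (N := N)) := by
  rintro (⟨i, w⟩ | i) (⟨j, v⟩ | j) h <;> obtain ⟨hij, hseq⟩ := Prod.mk.inj h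
  · exact congrArg Sum.inl (Prod.ext hij (extendSeq_injective true hseq))
  · exact absurd hseq (extendSeq_ne_constSeq w true)
  · exact absurd hseq.symm (extendSeq_ne_constSeq v true)
  · exact congrArg Sum.inr hij

lemma RationalPath.exists_eq_boundary {p : Fin N × (ℕ → Bool)} (hp : RationalPath p)
    (hN : 1 ≤ N) : ∃ r, p = leftBoundary r ∨ p = rightBoundary hN r := by
  obtain ⟨i, s⟩ := p
  obtain ⟨c, m, hm⟩ := hp
  cases c with
  | true =>
    rcases eq_constSeq_or_exists_extendSeq hm with rfl | ⟨w, rfl⟩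
    · exact ⟨.inr i, .inl rfl⟩
    · exact ⟨.inl (i, w), .inl rfl⟩
  | false =>
    rcases eq_constSeq_or_exists_extendSeq hm with rfl | ⟨w, rfl⟩
    · obtain ⟨j, rfl⟩ := nextIdx_surjective hN i
      exact ⟨.inr j, .inr rfl⟩
    · exact ⟨.inl (i, w), .inr rfl⟩

end BoundaryPaths

section LiftedPaths

variable {N : ℕ} {Φ : Fin N → List Bool → ℝ}

/-- The `k`-th lift of the path `p` to the universal cover of the circle: the lexicographic order on
the pairs `(k, p)` is the order of the cuts of the lifted paths along the line. -/
def liftPath (k : ℤ) (p : Fin N × (ℕ → Bool)) : ℤ ×ₗ (Fin N ×ₗ Lex (ℕ → Bool)) :=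
  toLex (k, toLex (p.1, toLex p.2))

lemma liftPath_inj {k l : ℤ} {p q : Fin N × (ℕ → Bool)} :
    liftPath k p = liftPath l q ↔ k = l ∧ p = q := by
  simp [liftPath, Prod.ext_iff]

lemma liftPath_lt_liftPath {k l : ℤ} {p q : Fin N × (ℕ → Bool)} :
    liftPath k p < liftPath l q ↔ k < l ∨ k = l ∧ PathLt p q := by
  simp only [liftPath, Prod.Lex.toLex_lt_toLex, toLex_lt_toLex_iff_exists_false_true, PathLt]

/-- The lift of `cutLeft` to the path `liftPath k p`. -/
def liftLeft (Φ : Fin N → List Bool → ℝ) (k : ℤ) (p : Fin N × (ℕ → Bool)) : ℝ :=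
  cutLeft Φ p + k • ∑ i, Φ i []

/-- The lift of `cutRight` to the path `liftPath k p`. -/
def liftRight (Φ : Fin N → List Bool → ℝ) (k : ℤ) (p : Fin N × (ℕ → Bool)) : ℝ :=
  cutRight Φ p + k • ∑ i, Φ i []

lemma liftRight_le_liftLeft_of_lt (hΦ : IsNonnegHarmonic Φ) {k l : ℤ} {p q : Fin N × (ℕ → Bool)}
    (h : liftPath k p < liftPath l q) : liftRight Φ k p ≤ liftLeft Φ l q := by
  rcases liftPath_lt_liftPath.1 h with hkl | ⟨rfl, hpq⟩
  · calc liftRight Φ k p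
        ≤ ∑ i, Φ i [] + k • ∑ i, Φ i [] := add_le_add_left (cutRight_le_sum hΦ p) _
      _ = (k + 1) • ∑ i, Φ i [] := by rw [add_zsmul, one_zsmul, add_comm]
      _ ≤ l • ∑ i, Φ i [] :=
        zsmul_le_zsmul_left (Finset.sum_nonneg fun i _ => hΦ.nonneg i []) hkl
      _ ≤ liftLeft Φ l q := le_add_of_nonneg_left (cutLeft_nonneg hΦ q)
  · exact add_le_add_left (cutRight_le_cutLeft_of_pathLt hΦ hpq) _

lemma eq_or_eq_of_covBy_of_mem (hΦ : IsNonnegHarmonic Φ) {k l m : ℤ}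
    {p q s : Fin N × (ℕ → Bool)} (hcov : liftPath k p ⋖ liftPath l q) {x : ℝ}
    (hx : x ∈ Set.Ioo (liftLeft Φ k p) (liftRight Φ l q))
    (hxs : x ∈ Set.Icc (liftLeft Φ m s) (liftRight Φ m s)) : s = p ∨ s = q := by
  rcases lt_trichotomy (liftPath m s) (liftPath k p) with h | h | h
  · exact absurd hx.1 (hxs.2.trans (liftRight_le_liftLeft_of_lt hΦ h)).not_gt
  · exact .inl (liftPath_inj.1 h).2
  · rcases (hcov.ge_of_gt h).eq_or_lt with h' | h'
    · exact .inr (liftPath_inj.1 h').2.symm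
    · exact absurd hx.2 ((liftRight_le_liftLeft_of_lt hΦ h').trans hxs.1).not_gt

lemma disjoint_Ioo_of_covBy_of_lt (hΦ : IsNonnegHarmonic Φ) {k l k' l' : ℤ}
    {p q p' q' : Fin N × (ℕ → Bool)} (hcov : liftPath k p ⋖ liftPath l q)
    (hlt : liftPath k p < liftPath k' p') (hne : q ≠ p') :
    Disjoint (Set.Ioo (liftLeft Φ k p) (liftRight Φ l q))
      (Set.Ioo (liftLeft Φ k' p') (liftRight Φ l' q')) := by
  have h : liftPath l q < liftPath k' p' :=
    (hcov.ge_of_gt hlt).lt_of_ne fun h => hne (liftPath_inj.1 h).2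
  exact Set.disjoint_left.2 fun x hx hx' =>
    (hx'.1.trans hx.2).not_ge (liftRight_le_liftLeft_of_lt hΦ h)

/-- The number of turns around the circle from `leftBoundary r` to `rightBoundary hN r`: one for the
root region between the last and the first initial edge, none for the other regions. -/
def regionTurn : (Fin N × List Bool) ⊕ Fin N → ℤ
  | .inl _ => 0
  | .inr i => if (i : ℕ) + 1 < N then 0 else 1

lemma leftBoundary_covBy_rightBoundary (hN : 1 ≤ N) (k : ℤ) (r : (Fin N × List Bool) ⊕ Fin N) :
    liftPath k (leftBoundary r) ⋖ liftPath (k + regionTurn r) (rightBoundary hN r) := by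
  simp only [liftPath, Prod.Lex.toLex_covBy_toLex_iff]
  rcases r with ⟨i, w⟩ | i
  · exact .inl ⟨(add_zero k).symm, .inl ⟨rfl, toLex_extendSeq_covBy w⟩⟩
  by_cases h : (i : ℕ) + 1 < N
  · exact .inl ⟨by simp [regionTurn, h], .inr
      ⟨covBy_nextIdx hN h, isMax_toLex_constSeq_true, isMin_toLex_constSeq_false⟩⟩
  · have hmax : IsMax i := fun j _ => by rw [Fin.le_def]; omega
    exact .inr ⟨by simp [regionTurn, h, Order.covBy_add_one],
      isMax_toLex_prodMk hmax isMax_toLex_constSeq_true,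
      isMin_toLex_prodMk (isMin_nextIdx hN h) isMin_toLex_constSeq_false⟩

end LiftedPaths

section Circle

variable {N : ℕ} {Φ : Fin N → List Bool → ℝ}

lemma coe_liftLeft (k : ℤ) (p : Fin N × (ℕ → Bool)) :
    (liftLeft Φ k p : AddCircle (∑ i, Φ i [])) = cutLeft Φ p := by
  simp [liftLeft]

lemma coe_liftRight (k : ℤ) (p : Fin N × (ℕ → Bool)) :
    (liftRight Φ k p : AddCircle (∑ i, Φ i [])) = cutRight Φ p := by
  simp [liftRight]

lemma coe_mem_coe_image_irrationalCuts_iff {x : ℝ} :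
    (x : AddCircle (∑ i, Φ i [])) ∈
      (fun y : ℝ => (y : AddCircle (∑ i, Φ i []))) '' irrationalCuts Φ ↔
        ∃ k p, ¬ RationalPath p ∧ x ∈ Set.Icc (liftLeft Φ k p) (liftRight Φ k p) := by
  simp only [coe_mem_coe_image_iff, irrationalCuts, Set.mem_iUnion₂, exists_prop,
    Set.sub_mem_Icc_iff_left]
  rfl

lemma regionInterval_eq_image_Ioo (hΦ : IsNonnegHarmonic Φ) (hN : 1 ≤ N)
    (r : (Fin N × List Bool) ⊕ Fin N) :
    regionInterval hN Φ r =
      (fun y : ℝ => (y : AddCircle (∑ i, Φ i []))) ''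
        Set.Ioo (liftLeft Φ 0 (leftBoundary r))
          (liftRight Φ (regionTurn r) (rightBoundary hN r)) := by
  rw [liftLeft, liftRight, zero_zsmul, add_zero,
    ← XL_eq_cutLeft hΦ (eventually_leftBoundary r).frequently,
    ← XR_eq_cutRight hΦ (eventually_rightBoundary hN r).frequently]
  rcases r with e | i
  · simp [regionInterval, leftBoundary, rightBoundary, regionTurn]
  · by_cases h : (i : ℕ) + 1 < N <;>
      simp [regionInterval, leftBoundary, rightBoundary, regionTurn, h]

lemma coe_mem_regionInterval_iff (hΦ : IsNonnegHarmonic Φ) (hN : 1 ≤ N)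
    {r : (Fin N × List Bool) ⊕ Fin N} {x : ℝ} :
    (x : AddCircle (∑ i, Φ i [])) ∈ regionInterval hN Φ r ↔
      ∃ k : ℤ, x ∈ Set.Ioo (liftLeft Φ k (leftBoundary r))
        (liftRight Φ (k + regionTurn r) (rightBoundary hN r)) := by
  rw [regionInterval_eq_image_Ioo hΦ, coe_mem_coe_image_iff]
  refine exists_congr fun k => ?_
  rw [Set.sub_mem_Ioo_iff_left]
  simp only [liftLeft, liftRight, zero_zsmul, add_zero, add_zsmul]
  rw [add_comm (k • _), add_assoc]

lemma isOpen_regionInterval (hΦ : IsNonnegHarmonic Φ) (hN : 1 ≤ N)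
    (r : (Fin N × List Bool) ⊕ Fin N) : IsOpen (regionInterval hN Φ r) := by
  rw [regionInterval_eq_image_Ioo hΦ]
  exact QuotientAddGroup.isOpenMap_coe _ isOpen_Ioo

lemma disjoint_regionInterval_XbarInf (hΦ : IsNonnegHarmonic Φ) (hN : 1 ≤ N)
    (r : (Fin N × List Bool) ⊕ Fin N) : Disjoint (regionInterval hN Φ r) (XbarInf Φ) := by
  rw [XbarInf_eq_closure_image hΦ]
  refine Disjoint.closure_right (Set.disjoint_left.2 ?_) (isOpen_regionInterval hΦ hN r)
  rw [QuotientAddGroup.mk_surjective.forall]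
  intro x hxr hxU
  obtain ⟨k, hxk⟩ := (coe_mem_regionInterval_iff hΦ hN).1 hxr
  obtain ⟨m, p, hp, hxp⟩ := coe_mem_coe_image_irrationalCuts_iff.1 hxU
  rcases eq_or_eq_of_covBy_of_mem hΦ (leftBoundary_covBy_rightBoundary hN k r) hxk hxp with
    rfl | rfl
  · exact hp (rationalPath_leftBoundary r)
  · exact hp (rationalPath_rightBoundary hN r)

lemma disjoint_regionInterval (hΦ : IsNonnegHarmonic Φ) (hN : 1 ≤ N)
    {r r' : (Fin N × List Bool) ⊕ Fin N} (hne : r ≠ r') :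
    Disjoint (regionInterval hN Φ r) (regionInterval hN Φ r') := by
  rw [Set.disjoint_left, QuotientAddGroup.mk_surjective.forall]
  intro x hxr hxr'
  obtain ⟨k, hxk⟩ := (coe_mem_regionInterval_iff hΦ hN).1 hxr
  obtain ⟨k', hxk'⟩ := (coe_mem_regionInterval_iff hΦ hN).1 hxr'
  rcases lt_trichotomy (liftPath k (leftBoundary r)) (liftPath k' (leftBoundary r'))
    with h | h | h
  · exact Set.disjoint_left.1 (disjoint_Ioo_of_covBy_of_lt hΦ
      (leftBoundary_covBy_rightBoundary hN k r) h (rightBoundary_ne_leftBoundary hN r r')) hxk hxk'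
  · exact hne (leftBoundary_injective (liftPath_inj.1 h).2)
  · exact Set.disjoint_left.1 (disjoint_Ioo_of_covBy_of_lt hΦ
      (leftBoundary_covBy_rightBoundary hN k' r') h (rightBoundary_ne_leftBoundary hN r' r))
      hxk' hxk

lemma mem_XbarInf_or_mem_regionInterval (hΦ : IsNonnegHarmonic Φ) (hN : 1 ≤ N) {k : ℤ}
    {r : (Fin N × List Bool) ⊕ Fin N} {x : ℝ}
    (hx : x ∈ Set.Icc (liftLeft Φ k (leftBoundary r))
      (liftRight Φ (k + regionTurn r) (rightBoundary hN r))) :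
    (x : AddCircle (∑ i, Φ i [])) ∈ XbarInf Φ ∨
      (x : AddCircle (∑ i, Φ i [])) ∈ regionInterval hN Φ r := by
  rcases hx.1.eq_or_lt with rfl | hleft
  · rw [coe_liftLeft]
    exact .inl (coe_mem_XbarInf hΦ
      (cutLeft_mem_closure_irrationalCuts hΦ (eventually_leftBoundary r).frequently))
  rcases hx.2.eq_or_lt with rfl | hright
  · rw [coe_liftRight]
    exact .inl (coe_mem_XbarInf hΦ
      (cutRight_mem_closure_irrationalCuts hΦ (eventually_rightBoundary hN r).frequently))
  · exact .inr ((coe_mem_regionInterval_iff hΦ hN).2 ⟨k, hleft, hright⟩)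

lemma liftLeft_le_liftRight (hΦ : IsNonnegHarmonic Φ) (k : ℤ) (p : Fin N × (ℕ → Bool)) :
    liftLeft Φ k p ≤ liftRight Φ k p :=
  add_le_add_left (cutLeft_le_cutRight hΦ p) _

lemma RationalPath.exists_mem_Icc_boundary (hΦ : IsNonnegHarmonic Φ) (hN : 1 ≤ N)
    {p : Fin N × (ℕ → Bool)} (hp : RationalPath p) {x : ℝ}
    (hx : x ∈ Set.Icc (cutLeft Φ p) (cutRight Φ p)) :
    ∃ k r, x ∈ Set.Icc (liftLeft Φ k (leftBoundary r))
      (liftRight Φ (k + regionTurn r) (rightBoundary hN r)) := by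
  have hx0 : x ∈ Set.Icc (liftLeft Φ 0 p) (liftRight Φ 0 p) := by
    simpa [liftLeft, liftRight] using hx
  have hmono (k : ℤ) (r : (Fin N × List Bool) ⊕ Fin N) :=
    liftRight_le_liftLeft_of_lt hΦ (leftBoundary_covBy_rightBoundary hN k r).lt
  obtain ⟨r, rfl | rfl⟩ := hp.exists_eq_boundary hN
  · exact ⟨0, r, hx0.1, hx0.2.trans ((hmono 0 r).trans (liftLeft_le_liftRight hΦ _ _))⟩
  · have h := hmono (-regionTurn r) r
    rw [neg_add_cancel] at h
    refine ⟨-regionTurn r, r, (liftLeft_le_liftRight hΦ _ _).trans (h.trans hx0.1), ?_⟩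
    rw [neg_add_cancel]
    exact hx0.2

lemma XbarInf_union_iUnion_regionInterval (hΦ : IsNonnegHarmonic Φ) (hN : 1 ≤ N)
    (hT : 0 < ∑ i, Φ i []) : XbarInf Φ ∪ ⋃ r, regionInterval hN Φ r = Set.univ := by
  have : Fact (0 < ∑ i, Φ i []) := ⟨hT⟩
  refine Set.eq_univ_of_forall fun y => ?_
  obtain ⟨x, hx, rfl⟩ := (AddCircle.coe_image_Ico_eq (∑ i, Φ i []) 0).ge (Set.mem_univ y)
  rw [zero_add] at hx
  obtain ⟨p, hxp⟩ := exists_path_mem_Icc hΦ.harmonic hx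
  by_cases hp : RationalPath p
  · obtain ⟨k, r, hxr⟩ := hp.exists_mem_Icc_boundary hΦ hN hxp
    exact (mem_XbarInf_or_mem_regionInterval hΦ hN hxr).imp_right fun h => Set.mem_iUnion.2 ⟨r, h⟩
  · exact .inl (coe_mem_XbarInf hΦ (subset_closure (Set.mem_biUnion hp hxp)))

end Circle

theorem complement_XbarInf_general {N : ℕ} (hN : 1 ≤ N) {Φ : Fin N → List Bool → ℝ}
    (hΦ : IsNonnegHarmonic Φ) (hT : 0 < ∑ i, Φ i []) :
    (XbarInf Φ)ᶜ = (⋃ r : (Fin N × List Bool) ⊕ Fin N, regionInterval hN Φ r) ∧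
    (∀ r r' : (Fin N × List Bool) ⊕ Fin N, r ≠ r' →
      Disjoint (regionInterval hN Φ r) (regionInterval hN Φ r')) := by
  have hdisj : Disjoint (XbarInf Φ) (⋃ r, regionInterval hN Φ r) :=
    Set.disjoint_iUnion_right.2 fun r => (disjoint_regionInterval_XbarInf hΦ hN r).symm
  have hunion := XbarInf_union_iUnion_regionInterval hΦ hN hT
  exact ⟨(IsCompl.of_eq hdisj.eq_bot hunion).compl_eq, fun r r' => disjoint_regionInterval hΦ hN⟩

/-- **Structure of the complement of `X̄_∞`.** The complement of `X̄_∞` in the circle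
`ℝ/∂Φℤ` is the union, over all complementary regions (edge-labelled regions and root
regions), of the open intervals `J_e`, and these intervals are pairwise disjoint. -/
theorem complement_XbarInf (N : ℕ) (hN : 1 ≤ N) (Φ : Fin N → List Bool → ℝ)
    (hpos : ∀ (i : Fin N) (w : List Bool), 0 < Φ i w)
    (hharm : ∀ (i : Fin N) (w : List Bool), Φ i w = Φ i (w ++ [false]) + Φ i (w ++ [true])) :
    (XbarInf Φ)ᶜ = (⋃ r : (Fin N × List Bool) ⊕ Fin N, regionInterval hN Φ r) ∧
    (∀ r r' : (Fin N × List Bool) ⊕ Fin N, r ≠ r' →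
      Disjoint (regionInterval hN Φ r) (regionInterval hN Φ r')) :=
  complement_XbarInf_general hN ⟨fun i w => (hpos i w).le, hharm⟩ <|
    Finset.sum_pos (fun i _ => hpos i []) ⟨⟨0, hN⟩, Finset.mem_univ _⟩
end
end

section
/- (Birman–Series phenomenon.) Let π : ℝ → AddCircle ∂Φ be the quotient map and let X̄_∞ ⊆ AddCircle ∂Φ be the closure of ⋃_{p irrational} π([X^L_∞(p), X^R_∞(p)]), the union over all irrational paths p of the images of the closed real intervals [X^L_∞(p), X^R_∞(p)]. Then the Haar measure λ on AddCircle ∂Φ, normalized to have total mass ∂Φ, satisfies λ(X̄_∞) = 2 · Error(Φ). -/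
noncomputable section
open Filter Topology Classical MeasureTheory

/-- The word `[s 0, …, s (m-1)]` of length `m`. -/
def word (s : ℕ → Bool) (m : ℕ) : List Bool := List.ofFn (fun k : Fin m => s k.val)

/-- `Φ_∞(p) = lim_n Φ(p^n)`. -/
def PhiInf {N : ℕ} (Φ : Fin N → List Bool → ℝ) (p : Fin N × (ℕ → Bool)) : ℝ :=
  limUnder atTop (fun m => Φ p.1 (word p.2 m))

/-- The gap of the complementary region labelled by the edge `(i, w)`:
`Gap_Φ(i,w) = (Φ_∞((i, w ++ [false] ++ true^∞)) + Φ_∞((i, w ++ [true] ++ false^∞)))/2`. -/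
def GapPhi {N : ℕ} (Φ : Fin N → List Bool → ℝ) (i : Fin N) (w : List Bool) : ℝ :=
  (PhiInf Φ (i, extendSeq w false true) + PhiInf Φ (i, extendSeq w true false)) / 2

/-- The total gap `Gap(Φ)`: the sum of `Gap_Φ` over all edge-labelled complementary
regions plus the contribution of the `N` root regions. -/
def TotalGap {N : ℕ} (Φ : Fin N → List Bool → ℝ) : ℝ :=
  (∑' x : Fin N × List Bool, GapPhi Φ x.1 x.2) +
    (1/2) * ∑ i : Fin N, (PhiInf Φ (i, constSeq true) + PhiInf Φ (i, constSeq false))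

/-!
Lay the edges of a sphere out in order along `[0, ∂Φ]`, the edge `e` occupying an interval of
length `Φ(e)`. By harmonicity the intervals of the two successors of an edge subdivide its own, so
the edges of a path `p` give nested intervals, shrinking to an interval of length `Φ_∞(p)` centred
at `X_∞(p)`. These limit intervals cover `(0, ∂Φ]`, are ordered like the paths, and overlap at most
at endpoints. An irrational path is approached by paths from both sides, so its limit interval is
`[X^L_∞(p), X^R_∞(p)]`. Each complementary region is bounded by two rational paths, and every
rational path bounds exactly one region; hence the limit intervals of the rational paths have total
length `2 Gap(Φ)`. Their interiors form an open set disjoint from the irrational intervals, so up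
to countably many points `X̄_∞` is its complement, of measure `∂Φ - 2 Gap(Φ)`.
-/

namespace BirmanSeries

section General

theorem exists_sum_filter_lt_le {ι M : Type*} [LinearOrder ι] [AddCommMonoid M] [LinearOrder M]
    (s : Finset ι) (f : ι → M) {x : M} (hpos : 0 < x) (hx : x ≤ ∑ i ∈ s, f i) :
    ∃ i ∈ s, ∑ j ∈ s with j < i, f j ≤ x ∧ x ≤ ∑ j ∈ s with j < i, f j + f i := by
  induction s using Finset.induction_on_max with
  | empty => exact absurd hx (by simpa using hpos)
  | insert a s hmax ih =>
    rcases le_total x (∑ i ∈ s, f i) with hxs | hxs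
    · obtain ⟨i, hi, hle⟩ := ih hxs
      refine ⟨i, Finset.mem_insert_of_mem hi, ?_⟩
      rwa [Finset.filter_insert, if_neg (hmax i hi).not_gt]
    · refine ⟨a, Finset.mem_insert_self a s, ?_⟩
      rw [Finset.filter_insert, if_neg (lt_irrefl a), Finset.filter_true_of_mem hmax]
      refine ⟨hxs, ?_⟩
      rwa [add_comm, ← Finset.sum_insert fun ha => lt_irrefl a (hmax a ha)]

theorem lex_append_singleton_iff {α : Type*} {r : α → α → Prop} {u v : List α} {a b : α}
    (h : u.length = v.length) :
    List.Lex r (u ++ [a]) (v ++ [b]) ↔ List.Lex r u v ∨ u = v ∧ r a b := by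
  induction u generalizing v with
  | nil =>
    obtain rfl : v = [] := List.length_eq_zero_iff.1 h.symm
    simp [List.cons_lex_cons_iff]
  | cons c u ih =>
    obtain ⟨d, v, rfl⟩ := List.exists_cons_of_length_eq_add_one h.symm
    simp only [List.cons_append, List.cons_lex_cons_iff, ih (Nat.succ_injective h),
      List.cons.injEq]
    tauto

theorem eq_volume_of_measure_univ {T : ℝ} [Fact (0 < T)] {μ : Measure (AddCircle T)}
    [μ.IsAddHaarMeasure] (h : μ Set.univ = ENNReal.ofReal T) : μ = volume := by
  rw [Measure.addHaarMeasure_unique μ ⊤, TopologicalSpace.PositiveCompacts.coe_top, h]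
  rfl

theorem eq_of_coe_addCircle_eq {T : ℝ} [Fact (0 < T)] {x y : ℝ} (hx : x ∈ Set.Icc 0 T)
    (hy : y ∈ Set.Ioo 0 T) (h : (x : AddCircle T) = y) : x = y := by
  rcases hx.1.eq_or_lt with rfl | hpos
  · refine (AddCircle.coe_eq_coe_iff_of_mem_Ico (a := 0) ?_ ?_).1 h <;> rw [zero_add]
    exacts [⟨le_rfl, Fact.out⟩, Set.Ioo_subset_Ico_self hy]
  · refine (AddCircle.coe_eq_coe_iff_of_mem_Ioc (a := 0) ?_ ?_).1 h <;> rw [zero_add]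
    exacts [⟨hpos, hx.2⟩, Set.Ioo_subset_Ioc_self hy]

theorem disjoint_preimage_closure_image_coe {T : ℝ} [Fact (0 < T)] {K U : Set ℝ}
    (hK : K ⊆ Set.Icc 0 T) (hU : U ⊆ Set.Ioo 0 T) (hopen : IsOpen U) (h : Disjoint K U) :
    Disjoint ((fun x : ℝ => (x : AddCircle T)) ⁻¹' closure ((fun x : ℝ => (x : AddCircle T)) '' K))
      U := by
  have himage : Disjoint ((fun x : ℝ => (x : AddCircle T)) '' K)
      ((fun x : ℝ => (x : AddCircle T)) '' U) := by
    rw [Set.disjoint_left]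
    rintro _ ⟨x, hx, rfl⟩ ⟨y, hy, hyx⟩
    exact Set.disjoint_left.1 h hx (eq_of_coe_addCircle_eq (hK hx) (hU hy) hyx.symm ▸ hy)
  have hclosure := himage.closure_left (QuotientAddGroup.isOpenMap_coe U hopen)
  exact (hclosure.preimage _).mono_right (Set.subset_preimage_image _ U)

end General

section Words

theorem length_word (s : ℕ → Bool) (n : ℕ) : (word s n).length = n := by
  simp only [word, List.length_ofFn]

theorem word_succ (s : ℕ → Bool) (n : ℕ) : word s (n + 1) = word s n ++ [s n] := by
  simp only [word, List.ofFn_succ_last, Fin.val_castSucc, Fin.val_last]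

theorem word_congr {s t : ℕ → Bool} {n : ℕ} (h : ∀ k < n, s k = t k) : word s n = word t n :=
  congrArg List.ofFn (funext fun k : Fin n => h k k.isLt)

theorem word_update (s : ℕ → Bool) (n : ℕ) (b : Bool) :
    word (Function.update s n b) n = word s n :=
  word_congr fun _ hk => Function.update_of_ne hk.ne b s

theorem exists_forall_word {P : List Bool → Prop} (nil : P [])
    (append : ∀ w, P w → ∃ b, P (w ++ [b])) : ∃ s, ∀ n, P (word s n) := by
  have append' : ∀ w, ∃ b, P w → P (w ++ [b]) := fun w =>
    (Classical.em (P w)).elim (fun h => (append w h).imp fun _ hb _ => hb)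
      fun h => ⟨true, fun h' => (h h').elim⟩
  choose next hnext using append'
  let W : ℕ → List Bool := Nat.rec [] fun _ w => w ++ [next w]
  have hword : ∀ n, word (fun k => next (W k)) n = W n := by
    intro n
    induction n with
    | zero => rfl
    | succ n ih => rw [word_succ, ih]
  refine ⟨fun k => next (W k), fun n => ?_⟩
  rw [hword]
  induction n with
  | zero => exact nil
  | succ n ih => exact hnext _ ih

theorem extendSeq_length (w : List Bool) (b c : Bool) : extendSeq w b c w.length = b := by
  simp [extendSeq]

theorem extendSeq_of_length_lt {w : List Bool} {n : ℕ} (h : w.length < n) (b c : Bool) :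
    extendSeq w b c n = c := by
  simp [extendSeq, h.not_gt, h.ne']

theorem word_extendSeq (w : List Bool) (b c : Bool) : word (extendSeq w b c) w.length = w := by
  simp [word, extendSeq]

theorem extendSeq_word {s : ℕ → Bool} {k : ℕ} {c : Bool} (h : ∀ n > k, s n = c) :
    extendSeq (word s k) (s k) c = s := by
  funext n
  rcases lt_trichotomy n k with hn | rfl | hn
  · simp [extendSeq, hn, word]
  · simp [extendSeq, length_word]
  · rw [extendSeq_of_length_lt (by rwa [length_word]), h n hn]

theorem extendSeq_not_ne_constSeq (w : List Bool) (b c : Bool) :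
    extendSeq w b (!b) ≠ constSeq c := by
  intro h
  have hb : b = c := (extendSeq_length w b _).symm.trans (congrFun h _)
  have hb' : (!b) = c :=
    (extendSeq_of_length_lt (Nat.lt_succ_self _) b _).symm.trans (congrFun h _)
  exact Bool.not_ne_self b (hb'.trans hb.symm)

/- The length of `w` is the last index at which the sequence differs from its limit `!b`. -/
theorem extendSeq_not_injective :
    Function.Injective fun x : List Bool × Bool => extendSeq x.1 x.2 (!x.2) := by
  have length_le : ∀ {w w' : List Bool} {b : Bool},
      extendSeq w b (!b) = extendSeq w' b (!b) → w'.length ≤ w.length := by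
    intro w w' b h
    by_contra! hlt
    have hb := congrFun h w'.length
    rw [extendSeq_of_length_lt hlt, extendSeq_length] at hb
    exact Bool.not_ne_self b hb
  rintro ⟨w, b⟩ ⟨w', b'⟩ (h : extendSeq w b (!b) = extendSeq w' b' (!b'))
  obtain rfl : b = b' := by
    have htail := congrFun h (max w.length w'.length + 1)
    rwa [extendSeq_of_length_lt (by omega), extendSeq_of_length_lt (by omega),
      Bool.not_inj_iff] at htail
  have hlength : w.length = w'.length := (length_le h.symm).antisymm (length_le h)
  have hw : w = w' := by
    rw [← word_extendSeq w b (!b), h, hlength, word_extendSeq]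
  rw [hw]

end Words

section Order

variable {N : ℕ}

theorem edgeLt_iff_toLex_lt {e f : Fin N × List Bool} : EdgeLt e f ↔ toLex e < toLex f :=
  Prod.Lex.toLex_lt_toLex.symm

theorem pathLt_iff_toLex_lt {p q : Fin N × (ℕ → Bool)} :
    PathLt p q ↔ toLex (p.1, toLex p.2) < toLex (q.1, toLex q.2) := by
  rw [Prod.Lex.toLex_lt_toLex]
  exact or_congr_right (and_congr_right' (exists_congr fun _ =>
    and_congr_right' Bool.lt_iff.symm))

theorem pathLt_or_pathLt_of_ne {p q : Fin N × (ℕ → Bool)} (h : p ≠ q) :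
    PathLt p q ∨ PathLt q p := by
  simp only [pathLt_iff_toLex_lt]
  exact lt_or_gt_of_ne fun heq => h (by simpa [Prod.ext_iff] using heq)

theorem edgeLt_append_iff {i j : Fin N} {u w : List Bool} {b c : Bool}
    (h : u.length = w.length) :
    EdgeLt (j, u ++ [b]) (i, w ++ [c]) ↔ EdgeLt (j, u) (i, w) ∨ (j, u) = (i, w) ∧ b < c := by
  simp only [EdgeLt, lex_append_singleton_iff h, Prod.mk.injEq]
  tauto

/-- The edge `p^(n+1)` of the path `p`, which lies in the sphere `S(n+1)`. It is indexed by the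
length of its word. -/
def edgeAt (p : Fin N × (ℕ → Bool)) (n : ℕ) : Fin N × List Bool := (p.1, word p.2 n)

theorem exists_edgeLt_of_pathLt {p q : Fin N × (ℕ → Bool)} (h : PathLt p q) :
    ∃ n, EdgeLt (edgeAt p n) (edgeAt q n) := by
  rcases h with h | ⟨h, n, hlt, hp, hq⟩
  · exact ⟨0, Or.inl h⟩
  · refine ⟨n + 1, ?_⟩
    simp only [edgeAt, word_succ]
    rw [edgeLt_append_iff (by simp only [length_word])]
    exact Or.inr ⟨Prod.ext h (word_congr hlt), Bool.lt_iff.2 ⟨hp, hq⟩⟩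

/-- The edges of the sphere `S(n+1)`, that is those whose word has length `n`. -/
def sphere (N n : ℕ) : Finset (Fin N × List Bool) :=
  Finset.univ.image fun x : Fin N × (Fin n → Bool) => (x.1, List.ofFn x.2)

theorem mem_sphere {n : ℕ} {e : Fin N × List Bool} : e ∈ sphere N n ↔ e.2.length = n := by
  simp only [sphere, Finset.mem_image, Finset.mem_univ, true_and]
  constructor
  · rintro ⟨x, rfl⟩
    exact List.length_ofFn
  · rintro rfl
    exact ⟨(e.1, e.2.get), Prod.ext rfl (List.ofFn_get e.2)⟩

/-- The edges that precede `e` in the sphere containing `e`. -/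
def edgesBefore (e : Fin N × List Bool) : Finset (Fin N × List Bool) :=
  {f ∈ sphere N e.2.length | EdgeLt f e}

theorem mem_edgesBefore {e f : Fin N × List Bool} :
    f ∈ edgesBefore e ↔ f.2.length = e.2.length ∧ EdgeLt f e := by
  rw [edgesBefore, Finset.mem_filter, mem_sphere]

theorem notMem_edgesBefore_self (e : Fin N × List Bool) : e ∉ edgesBefore e := fun h =>
  lt_irrefl _ (edgeLt_iff_toLex_lt.1 (mem_edgesBefore.1 h).2)

theorem mem_edgesBefore_append {i j : Fin N} {u w : List Bool} {b c : Bool} :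
    (j, u ++ [b]) ∈ edgesBefore (i, w ++ [c]) ↔
      (j, u) ∈ edgesBefore (i, w) ∨ (j, u) = (i, w) ∧ b < c := by
  by_cases h : u.length = w.length
  · simp [mem_edgesBefore, edgeLt_append_iff h, h]
  · have hne : u ≠ w := ne_of_apply_ne List.length h
    simp [mem_edgesBefore, h, hne]

theorem exists_append_of_mem_edgesBefore {i : Fin N} {w : List Bool} {c : Bool}
    {f : Fin N × List Bool} (hf : f ∈ edgesBefore (i, w ++ [c])) :
    ∃ j u b, f = (j, u ++ [b]) := by
  have hlength : f.2.length = w.length + 1 := by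
    simpa only [List.length_append, List.length_singleton] using (mem_edgesBefore.1 hf).1
  obtain ⟨u, b, hub⟩ := (List.eq_nil_or_concat' f.2).resolve_left fun h => by simp [h] at hlength
  exact ⟨f.1, u, b, Prod.ext rfl hub⟩

theorem edgesBefore_append_false (i : Fin N) (w : List Bool) :
    edgesBefore (i, w ++ [false]) =
      (edgesBefore (i, w) ×ˢ Finset.univ).image
        fun x : (Fin N × List Bool) × Bool => (x.1.1, x.1.2 ++ [x.2]) := by
  ext f
  simp only [Finset.mem_image, Finset.mem_product, Finset.mem_univ, and_true, Prod.exists]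
  constructor
  · intro hf
    obtain ⟨j, u, b, rfl⟩ := exists_append_of_mem_edgesBefore hf
    exact ⟨j, u, b, (mem_edgesBefore_append.1 hf).resolve_right fun h => not_lt_bot h.2, rfl⟩
  · rintro ⟨j, u, b, hu, rfl⟩
    exact mem_edgesBefore_append.2 (Or.inl hu)

theorem edgesBefore_append_true (i : Fin N) (w : List Bool) :
    edgesBefore (i, w ++ [true]) =
      insert (i, w ++ [false]) (edgesBefore (i, w ++ [false])) := by
  ext f
  rw [Finset.mem_insert]
  constructor
  · intro hf
    obtain ⟨j, u, b, rfl⟩ := exists_append_of_mem_edgesBefore hf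
    rw [mem_edgesBefore_append] at hf ⊢
    rcases hf with hf | ⟨hf, hb⟩
    · exact Or.inr (Or.inl hf)
    · left
      rw [(Bool.lt_iff.1 hb).1, (Prod.mk.inj hf).1, (Prod.mk.inj hf).2]
  · rintro (rfl | hf)
    · exact mem_edgesBefore_append.2 (Or.inr ⟨rfl, Bool.false_lt_true⟩)
    · obtain ⟨j, u, b, rfl⟩ := exists_append_of_mem_edgesBefore hf
      rw [mem_edgesBefore_append] at hf ⊢
      exact hf.imp_right fun h => absurd h.2 not_lt_bot

end Order

section EdgeIntervals

variable {N : ℕ} {Φ : Fin N → List Bool → ℝ}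

/-- The harmonicity condition: the value on an edge is the sum of the values on its two
successors. -/
def IsHarmonic (Φ : Fin N → List Bool → ℝ) : Prop :=
  ∀ i w, Φ i w = Φ i (w ++ [false]) + Φ i (w ++ [true])

/-- The left end of the interval of length `Φ(e)` that `e` occupies when the edges of its sphere
are laid out in order along `[0, ∂Φ]`. -/
def leftEnd (Φ : Fin N → List Bool → ℝ) (e : Fin N × List Bool) : ℝ :=
  ∑ f ∈ edgesBefore e, Φ f.1 f.2

/-- The right end of the interval occupied by `e`; see `leftEnd`. -/
def rightEnd (Φ : Fin N → List Bool → ℝ) (e : Fin N × List Bool) : ℝ :=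
  leftEnd Φ e + Φ e.1 e.2

theorem rightEnd_eq_sum_insert (Φ : Fin N → List Bool → ℝ) (e : Fin N × List Bool) :
    rightEnd Φ e = ∑ f ∈ insert e (edgesBefore e), Φ f.1 f.2 := by
  rw [Finset.sum_insert (notMem_edgesBefore_self e), add_comm]
  rfl

theorem leftEnd_nil (Φ : Fin N → List Bool → ℝ) (i : Fin N) :
    leftEnd Φ (i, []) = ∑ j with j < i, Φ j [] := by
  have hbefore : edgesBefore (i, []) = ({j | j < i} : Finset (Fin N)).image fun j => (j, []) := by
    ext ⟨j, u⟩
    simp only [mem_edgesBefore, List.length_nil, List.length_eq_zero_iff, EdgeLt,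
      Finset.mem_image, Finset.mem_filter, Finset.mem_univ, true_and, Prod.mk.injEq]
    constructor
    · rintro ⟨rfl, hj | ⟨-, hj⟩⟩
      · exact ⟨j, hj, rfl, rfl⟩
      · cases hj
    · rintro ⟨j, hj, rfl, rfl⟩
      exact ⟨rfl, Or.inl hj⟩
  rw [leftEnd, hbefore, Finset.sum_image (Prod.mk_left_injective _).injOn]

theorem rightEnd_append_false (Φ : Fin N → List Bool → ℝ) (i : Fin N) (w : List Bool) :
    rightEnd Φ (i, w ++ [false]) = leftEnd Φ (i, w ++ [true]) := by
  rw [rightEnd_eq_sum_insert, leftEnd, edgesBefore_append_true]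

theorem rightEnd_le_leftEnd_of_edgeLt (h0 : 0 ≤ Φ) {e f : Fin N × List Bool}
    (hlength : e.2.length = f.2.length) (h : EdgeLt e f) : rightEnd Φ e ≤ leftEnd Φ f := by
  rw [rightEnd_eq_sum_insert, leftEnd]
  refine Finset.sum_le_sum_of_subset_of_nonneg ?_ fun _ _ _ => h0 _ _
  refine Finset.insert_subset (mem_edgesBefore.2 ⟨hlength, h⟩) fun g hg => ?_
  obtain ⟨hglength, hge⟩ := mem_edgesBefore.1 hg
  rw [edgeLt_iff_toLex_lt] at h hge
  exact mem_edgesBefore.2 ⟨hglength.trans hlength, edgeLt_iff_toLex_lt.2 (hge.trans h)⟩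

theorem leftEnd_nonneg (h0 : 0 ≤ Φ) (e : Fin N × List Bool) : 0 ≤ leftEnd Φ e :=
  Finset.sum_nonneg fun _ _ => h0 _ _

theorem leftEnd_le_rightEnd (h0 : 0 ≤ Φ) (e : Fin N × List Bool) : leftEnd Φ e ≤ rightEnd Φ e :=
  le_add_of_nonneg_right (h0 _ _)

theorem rightEnd_nil_le (h0 : 0 ≤ Φ) (i : Fin N) : rightEnd Φ (i, []) ≤ ∑ j, Φ j [] := by
  have hsum : rightEnd Φ (i, []) = ∑ j ∈ insert i ({j | j < i} : Finset (Fin N)), Φ j [] := by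
    rw [Finset.sum_insert (by simp), add_comm, ← leftEnd_nil, rightEnd]
  rw [hsum]
  exact Finset.sum_le_univ_sum_of_nonneg fun j => h0 j []

theorem IsHarmonic.leftEnd_append_false (hΦ : IsHarmonic Φ) (i : Fin N) (w : List Bool) :
    leftEnd Φ (i, w ++ [false]) = leftEnd Φ (i, w) := by
  have hinj : Function.Injective
      fun x : (Fin N × List Bool) × Bool => (x.1.1, x.1.2 ++ [x.2]) := by
    rintro ⟨⟨j, u⟩, b⟩ ⟨⟨k, v⟩, c⟩ h
    simpa [and_assoc] using h
  rw [leftEnd, edgesBefore_append_false, Finset.sum_image hinj.injOn, Finset.sum_product, leftEnd]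
  refine Finset.sum_congr rfl fun f _ => ?_
  rw [Fintype.sum_bool, add_comm, ← hΦ]

theorem IsHarmonic.leftEnd_append_true (hΦ : IsHarmonic Φ) (i : Fin N) (w : List Bool) :
    leftEnd Φ (i, w ++ [true]) = leftEnd Φ (i, w) + Φ i (w ++ [false]) := by
  rw [← rightEnd_append_false, rightEnd, hΦ.leftEnd_append_false]

theorem IsHarmonic.rightEnd_append_true (hΦ : IsHarmonic Φ) (i : Fin N) (w : List Bool) :
    rightEnd Φ (i, w ++ [true]) = rightEnd Φ (i, w) := by
  rw [rightEnd, rightEnd, hΦ.leftEnd_append_true, add_assoc, ← hΦ]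

theorem IsHarmonic.leftEnd_le_leftEnd_append (hΦ : IsHarmonic Φ) (h0 : 0 ≤ Φ) (i : Fin N)
    (w : List Bool) (b : Bool) : leftEnd Φ (i, w) ≤ leftEnd Φ (i, w ++ [b]) := by
  cases b
  · exact (hΦ.leftEnd_append_false i w).ge
  · rw [hΦ.leftEnd_append_true]
    exact le_add_of_nonneg_right (h0 _ _)

theorem IsHarmonic.rightEnd_append_le_rightEnd (hΦ : IsHarmonic Φ) (h0 : 0 ≤ Φ) (i : Fin N)
    (w : List Bool) (b : Bool) : rightEnd Φ (i, w ++ [b]) ≤ rightEnd Φ (i, w) := by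
  cases b
  · rw [rightEnd_append_false, ← hΦ.rightEnd_append_true]
    exact leftEnd_le_rightEnd h0 _
  · exact (hΦ.rightEnd_append_true i w).le

theorem IsHarmonic.exists_forall_mem_Icc_leftEnd_rightEnd (hΦ : IsHarmonic Φ) {x : ℝ} (hpos : 0 < x)
    (hx : x ≤ ∑ i, Φ i []) :
    ∃ p : Fin N × (ℕ → Bool),
      ∀ n, x ∈ Set.Icc (leftEnd Φ (edgeAt p n)) (rightEnd Φ (edgeAt p n)) := by
  obtain ⟨i, -, hi⟩ := exists_sum_filter_lt_le Finset.univ (fun j => Φ j []) hpos hx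
  have hroot : x ∈ Set.Icc (leftEnd Φ (i, [])) (rightEnd Φ (i, [])) := by
    rwa [rightEnd, leftEnd_nil]
  obtain ⟨s, hs⟩ := exists_forall_word
    (P := fun w => x ∈ Set.Icc (leftEnd Φ (i, w)) (rightEnd Φ (i, w))) hroot fun w hw => by
      rcases le_total x (rightEnd Φ (i, w ++ [false])) with hle | hle
      · exact ⟨false, (hΦ.leftEnd_append_false i w).trans_le hw.1, hle⟩
      · refine ⟨true, rightEnd_append_false Φ i w ▸ hle, ?_⟩
        exact hw.2.trans (hΦ.rightEnd_append_true i w).ge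
  exact ⟨(i, s), hs⟩

end EdgeIntervals

section Limits

variable {N : ℕ} {Φ : Fin N → List Bool → ℝ}

theorem leftEnd_edgeAt (Φ : Fin N → List Bool → ℝ) (p : Fin N × (ℕ → Bool)) (n : ℕ) :
    leftEnd Φ (edgeAt p n) = ∑ x : Fin N × (Fin n → Bool),
      if EdgeLt (x.1, List.ofFn x.2) (edgeAt p n) then Φ x.1 (List.ofFn x.2) else 0 := by
  have hinj : Function.Injective fun x : Fin N × (Fin n → Bool) => (x.1, List.ofFn x.2) :=
    Function.injective_id.prodMap List.ofFn_injective
  have hlength : (edgeAt p n).2.length = n := length_word p.2 n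
  rw [leftEnd, edgesBefore, hlength, Finset.sum_filter, sphere, Finset.sum_image hinj.injOn]

theorem X_eq_midpoint (Φ : Fin N → List Bool → ℝ) (n : ℕ) (p : Fin N × (ℕ → Bool)) :
    X Φ n p = (leftEnd Φ (edgeAt p n) + rightEnd Φ (edgeAt p n)) / 2 := by
  have hX : X Φ n p = Φ p.1 (word p.2 n) / 2 + leftEnd Φ (edgeAt p n) := by
    rw [leftEnd_edgeAt]
    rfl
  rw [hX, rightEnd]
  simp only [edgeAt]
  ring

/-- The left end of the intersection of the nested intervals occupied by the edges of a path. -/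
def leftLim (Φ : Fin N → List Bool → ℝ) (p : Fin N × (ℕ → Bool)) : ℝ :=
  ⨆ n, leftEnd Φ (edgeAt p n)

/-- The right end of the intersection of the nested intervals occupied by the edges of a path. -/
def rightLim (Φ : Fin N → List Bool → ℝ) (p : Fin N × (ℕ → Bool)) : ℝ :=
  ⨅ n, rightEnd Φ (edgeAt p n)

namespace IsHarmonic

theorem monotone_leftEnd (hΦ : IsHarmonic Φ) (h0 : 0 ≤ Φ) (p : Fin N × (ℕ → Bool)) :
    Monotone fun n => leftEnd Φ (edgeAt p n) := by
  refine monotone_nat_of_le_succ fun n => ?_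
  simp only [edgeAt, word_succ]
  exact hΦ.leftEnd_le_leftEnd_append h0 _ _ _

theorem antitone_rightEnd (hΦ : IsHarmonic Φ) (h0 : 0 ≤ Φ) (p : Fin N × (ℕ → Bool)) :
    Antitone fun n => rightEnd Φ (edgeAt p n) := by
  refine antitone_nat_of_succ_le fun n => ?_
  simp only [edgeAt, word_succ]
  exact hΦ.rightEnd_append_le_rightEnd h0 _ _ _

theorem rightEnd_le_sum (hΦ : IsHarmonic Φ) (h0 : 0 ≤ Φ) (p : Fin N × (ℕ → Bool)) (n : ℕ) :
    rightEnd Φ (edgeAt p n) ≤ ∑ i, Φ i [] :=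
  (hΦ.antitone_rightEnd h0 p n.zero_le).trans (rightEnd_nil_le h0 p.1)

theorem tendsto_leftEnd (hΦ : IsHarmonic Φ) (h0 : 0 ≤ Φ) (p : Fin N × (ℕ → Bool)) :
    Tendsto (fun n => leftEnd Φ (edgeAt p n)) atTop (𝓝 (leftLim Φ p)) :=
  tendsto_atTop_ciSup (hΦ.monotone_leftEnd h0 p) ⟨_, Set.forall_mem_range.2 fun n =>
    (leftEnd_le_rightEnd h0 _).trans (hΦ.rightEnd_le_sum h0 p n)⟩

theorem tendsto_rightEnd (hΦ : IsHarmonic Φ) (h0 : 0 ≤ Φ) (p : Fin N × (ℕ → Bool)) :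
    Tendsto (fun n => rightEnd Φ (edgeAt p n)) atTop (𝓝 (rightLim Φ p)) :=
  tendsto_atTop_ciInf (hΦ.antitone_rightEnd h0 p) ⟨_, Set.forall_mem_range.2 fun n =>
    (leftEnd_nonneg h0 _).trans (leftEnd_le_rightEnd h0 (edgeAt p n))⟩

theorem leftEnd_le_leftLim (hΦ : IsHarmonic Φ) (h0 : 0 ≤ Φ) (p : Fin N × (ℕ → Bool)) (n : ℕ) :
    leftEnd Φ (edgeAt p n) ≤ leftLim Φ p :=
  (hΦ.monotone_leftEnd h0 p).ge_of_tendsto (hΦ.tendsto_leftEnd h0 p) n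

theorem rightLim_le_rightEnd (hΦ : IsHarmonic Φ) (h0 : 0 ≤ Φ) (p : Fin N × (ℕ → Bool)) (n : ℕ) :
    rightLim Φ p ≤ rightEnd Φ (edgeAt p n) :=
  (hΦ.antitone_rightEnd h0 p).le_of_tendsto (hΦ.tendsto_rightEnd h0 p) n

theorem leftLim_le_rightLim (hΦ : IsHarmonic Φ) (h0 : 0 ≤ Φ) (p : Fin N × (ℕ → Bool)) :
    leftLim Φ p ≤ rightLim Φ p :=
  le_of_tendsto_of_tendsto' (hΦ.tendsto_leftEnd h0 p) (hΦ.tendsto_rightEnd h0 p)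
    fun n => leftEnd_le_rightEnd h0 (edgeAt p n)

theorem leftLim_nonneg (hΦ : IsHarmonic Φ) (h0 : 0 ≤ Φ) (p : Fin N × (ℕ → Bool)) :
    0 ≤ leftLim Φ p :=
  (leftEnd_nonneg h0 _).trans (hΦ.leftEnd_le_leftLim h0 p 0)

theorem rightLim_le_sum (hΦ : IsHarmonic Φ) (h0 : 0 ≤ Φ) (p : Fin N × (ℕ → Bool)) :
    rightLim Φ p ≤ ∑ i, Φ i [] :=
  (hΦ.rightLim_le_rightEnd h0 p 0).trans (hΦ.rightEnd_le_sum h0 p 0)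

theorem PhiInf_eq (hΦ : IsHarmonic Φ) (h0 : 0 ≤ Φ) (p : Fin N × (ℕ → Bool)) :
    PhiInf Φ p = rightLim Φ p - leftLim Φ p := by
  refine Tendsto.limUnder_eq ?_
  refine ((hΦ.tendsto_rightEnd h0 p).sub (hΦ.tendsto_leftEnd h0 p)).congr fun n => ?_
  exact add_sub_cancel_left _ _

theorem PhiInf_nonneg (hΦ : IsHarmonic Φ) (h0 : 0 ≤ Φ) (p : Fin N × (ℕ → Bool)) :
    0 ≤ PhiInf Φ p := by
  rw [hΦ.PhiInf_eq h0]
  exact sub_nonneg.2 (hΦ.leftLim_le_rightLim h0 p)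

theorem Xinf_eq_midpoint (hΦ : IsHarmonic Φ) (h0 : 0 ≤ Φ) (p : Fin N × (ℕ → Bool)) :
    Xinf Φ p = (leftLim Φ p + rightLim Φ p) / 2 := by
  refine Tendsto.limUnder_eq ?_
  simp only [X_eq_midpoint]
  exact ((hΦ.tendsto_leftEnd h0 p).add (hΦ.tendsto_rightEnd h0 p)).div_const 2

theorem Xinf_mem_Icc (hΦ : IsHarmonic Φ) (h0 : 0 ≤ Φ) (p : Fin N × (ℕ → Bool)) :
    Xinf Φ p ∈ Set.Icc (leftLim Φ p) (rightLim Φ p) := by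
  have hle := hΦ.leftLim_le_rightLim h0 p
  rw [hΦ.Xinf_eq_midpoint h0]
  constructor <;> linarith

theorem rightLim_le_leftLim_of_pathLt (hΦ : IsHarmonic Φ) (h0 : 0 ≤ Φ)
    {p q : Fin N × (ℕ → Bool)} (h : PathLt p q) : rightLim Φ p ≤ leftLim Φ q := by
  obtain ⟨n, hn⟩ := exists_edgeLt_of_pathLt h
  have hlength : (edgeAt p n).2.length = (edgeAt q n).2.length := by
    simp only [edgeAt, length_word]
  calc rightLim Φ p ≤ rightEnd Φ (edgeAt p n) := hΦ.rightLim_le_rightEnd h0 p n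
    _ ≤ leftEnd Φ (edgeAt q n) := rightEnd_le_leftEnd_of_edgeLt h0 hlength hn
    _ ≤ leftLim Φ q := hΦ.leftEnd_le_leftLim h0 q n

theorem disjoint_Ioo_Icc (hΦ : IsHarmonic Φ) (h0 : 0 ≤ Φ) {p q : Fin N × (ℕ → Bool)}
    (h : p ≠ q) :
    Disjoint (Set.Ioo (leftLim Φ p) (rightLim Φ p)) (Set.Icc (leftLim Φ q) (rightLim Φ q)) := by
  refine Set.disjoint_left.2 fun x hp hq => ?_
  rcases pathLt_or_pathLt_of_ne h with h | h
  · exact (hp.2.trans_le ((hΦ.rightLim_le_leftLim_of_pathLt h0 h).trans hq.1)).false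
  · exact (hp.1.trans_le (hq.2.trans (hΦ.rightLim_le_leftLim_of_pathLt h0 h))).false

theorem exists_mem_Icc_leftLim_rightLim (hΦ : IsHarmonic Φ) (h0 : 0 ≤ Φ) {x : ℝ} (hpos : 0 < x)
    (hx : x ≤ ∑ i, Φ i []) : ∃ p, x ∈ Set.Icc (leftLim Φ p) (rightLim Φ p) := by
  obtain ⟨p, hp⟩ := hΦ.exists_forall_mem_Icc_leftEnd_rightEnd hpos hx
  exact ⟨p, le_of_tendsto' (hΦ.tendsto_leftEnd h0 p) fun n => (hp n).1,
    ge_of_tendsto' (hΦ.tendsto_rightEnd h0 p) fun n => (hp n).2⟩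

end IsHarmonic

theorem exists_ge_of_not_rationalPath {p : Fin N × (ℕ → Bool)} (hp : ¬ RationalPath p) (b : Bool)
    (m : ℕ) : ∃ n ≥ m, p.2 n = b := by
  by_contra! hne
  exact hp ⟨!b, m, fun n hn => Bool.eq_not.2 (hne n hn)⟩

theorem edgeAt_update (p : Fin N × (ℕ → Bool)) (n : ℕ) (b : Bool) :
    edgeAt (p.1, Function.update p.2 n b) n = edgeAt p n :=
  Prod.ext rfl (word_update p.2 n b)

theorem update_false_pathLt {p : Fin N × (ℕ → Bool)} {n : ℕ} (h : p.2 n = true) :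
    PathLt (p.1, Function.update p.2 n false) p :=
  Or.inr ⟨rfl, n, fun _ hk => Function.update_of_ne hk.ne _ _, Function.update_self .., h⟩

theorem pathLt_update_true {p : Fin N × (ℕ → Bool)} {n : ℕ} (h : p.2 n = false) :
    PathLt p (p.1, Function.update p.2 n true) :=
  Or.inr ⟨rfl, n, fun _ hk => (Function.update_of_ne hk.ne _ _).symm, h, Function.update_self ..⟩

namespace IsHarmonic

theorem XL_eq_leftLim (hΦ : IsHarmonic Φ) (h0 : 0 ≤ Φ) {p : Fin N × (ℕ → Bool)}
    (hp : ¬ RationalPath p) : XL Φ p = leftLim Φ p := by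
  have hfreq := exists_ge_of_not_rationalPath hp true
  have hne : (Xinf Φ '' {q | PathLt q p}).Nonempty :=
    (hfreq 0).elim fun _ hn => ⟨_, _, update_false_pathLt hn.2, rfl⟩
  refine IsLUB.csSup_eq ⟨?_, fun y hy => ?_⟩ hne
  · rintro _ ⟨q, hq, rfl⟩
    exact (hΦ.Xinf_mem_Icc h0 q).2.trans (hΦ.rightLim_le_leftLim_of_pathLt h0 hq)
  · refine le_of_tendsto' (hΦ.tendsto_leftEnd h0 p) fun m => ?_
    obtain ⟨n, hmn, hn⟩ := hfreq m
    let q : Fin N × (ℕ → Bool) := (p.1, Function.update p.2 n false)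
    calc leftEnd Φ (edgeAt p m) ≤ leftEnd Φ (edgeAt p n) := hΦ.monotone_leftEnd h0 p hmn
      _ = leftEnd Φ (edgeAt q n) := by rw [edgeAt_update]
      _ ≤ leftLim Φ q := hΦ.leftEnd_le_leftLim h0 q n
      _ ≤ Xinf Φ q := (hΦ.Xinf_mem_Icc h0 q).1
      _ ≤ y := hy ⟨q, update_false_pathLt hn, rfl⟩

theorem XR_eq_rightLim (hΦ : IsHarmonic Φ) (h0 : 0 ≤ Φ) {p : Fin N × (ℕ → Bool)}
    (hp : ¬ RationalPath p) : XR Φ p = rightLim Φ p := by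
  have hfreq := exists_ge_of_not_rationalPath hp false
  have hne : (Xinf Φ '' {q | PathLt p q}).Nonempty :=
    (hfreq 0).elim fun _ hn => ⟨_, _, pathLt_update_true hn.2, rfl⟩
  refine IsGLB.csInf_eq ⟨?_, fun y hy => ?_⟩ hne
  · rintro _ ⟨q, hq, rfl⟩
    exact (hΦ.rightLim_le_leftLim_of_pathLt h0 hq).trans (hΦ.Xinf_mem_Icc h0 q).1
  · refine ge_of_tendsto' (hΦ.tendsto_rightEnd h0 p) fun m => ?_
    obtain ⟨n, hmn, hn⟩ := hfreq m
    let q : Fin N × (ℕ → Bool) := (p.1, Function.update p.2 n true)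
    calc y ≤ Xinf Φ q := hy ⟨q, pathLt_update_true hn, rfl⟩
      _ ≤ rightLim Φ q := (hΦ.Xinf_mem_Icc h0 q).2
      _ ≤ rightEnd Φ (edgeAt q n) := hΦ.rightLim_le_rightEnd h0 q n
      _ = rightEnd Φ (edgeAt p n) := by rw [edgeAt_update]
      _ ≤ rightEnd Φ (edgeAt p m) := hΦ.antitone_rightEnd h0 p hmn

end IsHarmonic

end Limits

section RationalPaths

variable {N : ℕ} {Φ : Fin N → List Bool → ℝ}

/-- The enumeration of the rational paths by the sides of the complementary regions: the two paths
bounding the region of an edge `(i, w)` are `w ++ [b] ++ (!b)^∞`, and the remaining ones are the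
constant paths, which bound the root regions. -/
def rationalPath : (Fin N × List Bool) × Bool ⊕ Fin N × Bool → Fin N × (ℕ → Bool) :=
  Sum.elim (fun x => (x.1.1, extendSeq x.1.2 x.2 (!x.2))) fun x => (x.1, constSeq x.2)

theorem rationalPath_injective : Function.Injective (rationalPath (N := N)) := by
  refine Function.Injective.sumElim ?_ ?_ fun x y h =>
    extendSeq_not_ne_constSeq _ _ _ (congrArg Prod.snd h)
  · rintro ⟨⟨i, w⟩, b⟩ ⟨⟨j, v⟩, c⟩ h
    have hwv := extendSeq_not_injective (a₁ := (w, b)) (a₂ := (v, c)) (congrArg Prod.snd h)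
    simp only [Prod.mk.injEq] at h hwv ⊢
    exact ⟨⟨h.1, hwv.1⟩, hwv.2⟩
  · exact Function.injective_id.prodMap fun b c h => congrFun h 0

theorem range_rationalPath :
    Set.range (rationalPath (N := N)) = {p | RationalPath p} := by
  ext ⟨i, s⟩
  constructor
  · rintro ⟨⟨⟨j, w⟩, b⟩ | ⟨j, c⟩, h⟩ <;> obtain ⟨rfl, rfl⟩ := Prod.mk.inj h
    · exact ⟨!b, w.length + 1, fun n hn => extendSeq_of_length_lt hn b _⟩
    · exact ⟨c, 0, fun _ _ => rfl⟩
  · rintro ⟨c, m, hm : ∀ n ≥ m, s n = c⟩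
    induction m with
    | zero => exact ⟨Sum.inr (i, c), Prod.ext rfl (funext fun n => (hm n n.zero_le).symm)⟩
    | succ m ih =>
      by_cases hsm : s m = c
      · refine ih fun n hn => ?_
        rcases hn.eq_or_lt with rfl | hlt
        exacts [hsm, hm n hlt]
      · refine ⟨Sum.inl ((i, word s m), s m), Prod.ext rfl (extendSeq_word fun n hn => ?_)⟩
        rw [hm n hn]
        exact Bool.eq_not.2 (Ne.symm hsm)

theorem tsum_PhiInf_rationalPath (h : Summable fun r => PhiInf Φ (rationalPath r)) :
    ∑' r, PhiInf Φ (rationalPath r) = 2 * TotalGap Φ := by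
  have hedge := h.comp_injective Sum.inl_injective
  have hroot := h.comp_injective Sum.inr_injective
  rw [hedge.tsum_sum hroot, TotalGap, mul_add, ← tsum_mul_left]
  congr 1
  · refine hedge.tsum_prod.trans (tsum_congr fun x => ?_)
    simp only [Function.comp_apply, tsum_bool, rationalPath, Sum.elim_inl, GapPhi, Bool.not_false,
      Bool.not_true]
    ring
  · simp only [tsum_fintype, Fintype.sum_prod_type, Fintype.sum_bool, rationalPath, Sum.elim_inr]
    ring

end RationalPaths

section Measure

variable {N : ℕ} {Φ : Fin N → List Bool → ℝ}

/-- The union of the open intervals `(leftLim, rightLim)` attached to the rational paths. -/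
def openGaps (Φ : Fin N → List Bool → ℝ) : Set ℝ :=
  ⋃ r, Set.Ioo (leftLim Φ (rationalPath r)) (rightLim Φ (rationalPath r))

/-- The union of the closed intervals `[leftLim, rightLim]` attached to the irrational paths, for
which they equal `[X^L_∞(p), X^R_∞(p)]`; its projection to the circle has closure `X̄_∞`. -/
def irrationalPart (Φ : Fin N → List Bool → ℝ) : Set ℝ :=
  ⋃ p ∈ {p : Fin N × (ℕ → Bool) | ¬ RationalPath p}, Set.Icc (leftLim Φ p) (rightLim Φ p)

theorem isOpen_openGaps (Φ : Fin N → List Bool → ℝ) : IsOpen (openGaps Φ) :=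
  isOpen_iUnion fun _ => isOpen_Ioo

namespace IsHarmonic

theorem openGaps_subset (hΦ : IsHarmonic Φ) (h0 : 0 ≤ Φ) :
    openGaps Φ ⊆ Set.Ioo 0 (∑ i, Φ i []) :=
  Set.iUnion_subset fun _ =>
    Set.Ioo_subset_Ioo (hΦ.leftLim_nonneg h0 _) (hΦ.rightLim_le_sum h0 _)

theorem irrationalPart_subset (hΦ : IsHarmonic Φ) (h0 : 0 ≤ Φ) :
    irrationalPart Φ ⊆ Set.Icc 0 (∑ i, Φ i []) :=
  Set.iUnion₂_subset fun _ _ =>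
    Set.Icc_subset_Icc (hΦ.leftLim_nonneg h0 _) (hΦ.rightLim_le_sum h0 _)

theorem disjoint_irrationalPart_openGaps (hΦ : IsHarmonic Φ) (h0 : 0 ≤ Φ) :
    Disjoint (irrationalPart Φ) (openGaps Φ) := by
  simp only [irrationalPart, openGaps, Set.disjoint_iUnion_left, Set.disjoint_iUnion_right]
  intro r p hp
  have hr : RationalPath (rationalPath r) := range_rationalPath.subset ⟨r, rfl⟩
  have hne : rationalPath r ≠ p := fun h => hp (h ▸ hr)
  exact (hΦ.disjoint_Ioo_Icc h0 hne).symm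

theorem volume_openGaps_eq_tsum (hΦ : IsHarmonic Φ) (h0 : 0 ≤ Φ) :
    volume (openGaps Φ) = ∑' r, ENNReal.ofReal (PhiInf Φ (rationalPath r)) := by
  have hdisj : Pairwise (Function.onFun Disjoint fun r =>
      Set.Ioo (leftLim Φ (rationalPath r)) (rightLim Φ (rationalPath r))) := fun r s hrs =>
    (hΦ.disjoint_Ioo_Icc h0 (rationalPath_injective.ne hrs)).mono_right Set.Ioo_subset_Icc_self
  simp only [openGaps, measure_iUnion hdisj fun _ => measurableSet_Ioo, Real.volume_Ioo,
    hΦ.PhiInf_eq h0]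

theorem summable_PhiInf_rationalPath (hΦ : IsHarmonic Φ) (h0 : 0 ≤ Φ) :
    Summable fun r => PhiInf Φ (rationalPath r) := by
  have hfinite : volume (openGaps Φ) ≠ ⊤ :=
    measure_ne_top_of_subset (hΦ.openGaps_subset h0) measure_Ioo_lt_top.ne
  rw [hΦ.volume_openGaps_eq_tsum h0] at hfinite
  exact (ENNReal.summable_toReal hfinite).congr fun r =>
    ENNReal.toReal_ofReal (hΦ.PhiInf_nonneg h0 _)

theorem volume_openGaps (hΦ : IsHarmonic Φ) (h0 : 0 ≤ Φ) :
    volume (openGaps Φ) = ENNReal.ofReal (2 * TotalGap Φ) := by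
  have hsummable := hΦ.summable_PhiInf_rationalPath h0
  rw [hΦ.volume_openGaps_eq_tsum h0, ← tsum_PhiInf_rationalPath hsummable,
    ENNReal.ofReal_tsum_of_nonneg (fun r => hΦ.PhiInf_nonneg h0 _) hsummable]

theorem totalGap_nonneg (hΦ : IsHarmonic Φ) (h0 : 0 ≤ Φ) : 0 ≤ TotalGap Φ := by
  have hsum := tsum_PhiInf_rationalPath (hΦ.summable_PhiInf_rationalPath h0)
  have htsum : 0 ≤ ∑' r, PhiInf Φ (rationalPath r) := tsum_nonneg fun r => hΦ.PhiInf_nonneg h0 _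
  linarith

theorem XbarInf_eq (hΦ : IsHarmonic Φ) (h0 : 0 ≤ Φ) :
    XbarInf Φ = closure ((fun x : ℝ => (x : AddCircle (∑ i, Φ i []))) '' irrationalPart Φ) := by
  rw [XbarInf, irrationalPart, Set.image_iUnion₂]
  congr 1
  refine Set.iUnion₂_congr fun p hp => ?_
  rw [hΦ.XL_eq_leftLim h0 hp, hΦ.XR_eq_rightLim h0 hp]

/- The two sides differ at most by the countably many endpoints of the gaps. -/
theorem preimage_XbarInf_ae_eq [Fact (0 < ∑ i, Φ i [])] (hΦ : IsHarmonic Φ) (h0 : 0 ≤ Φ) :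
    ((fun x : ℝ => (x : AddCircle (∑ i, Φ i []))) ⁻¹' XbarInf Φ ∩ Set.Ioc 0 (∑ i, Φ i []) :
      Set ℝ) =ᵐ[volume] (Set.Ioc 0 (∑ i, Φ i []) \ openGaps Φ : Set ℝ) := by
  have hclosed : openGaps Φ =ᵐ[volume]
      ⋃ r, Set.Icc (leftLim Φ (rationalPath r)) (rightLim Φ (rationalPath r)) :=
    Filter.EventuallyEq.countable_iUnion fun _ => Ioo_ae_eq_Icc
  have hdisj := disjoint_preimage_closure_image_coe (hΦ.irrationalPart_subset h0)
    (hΦ.openGaps_subset h0) (isOpen_openGaps Φ) (hΦ.disjoint_irrationalPart_openGaps h0)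
  rw [← hΦ.XbarInf_eq h0] at hdisj
  refine Filter.EventuallyLE.antisymm (LE.le.eventuallyLE fun x hx =>
    ⟨hx.2, Set.disjoint_left.1 hdisj hx.1⟩) ?_
  refine ((ae_eq_refl _).diff hclosed).le.trans (LE.le.eventuallyLE fun x hx => ?_)
  refine ⟨?_, hx.1⟩
  obtain ⟨p, hp⟩ := hΦ.exists_mem_Icc_leftLim_rightLim h0 hx.1.1 hx.1.2
  have hirr : ¬ RationalPath p := fun hrat => by
    obtain ⟨r, rfl⟩ := range_rationalPath.superset hrat
    exact hx.2 (Set.mem_iUnion.2 ⟨r, hp⟩)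
  rw [Set.mem_preimage, hΦ.XbarInf_eq h0]
  exact subset_closure (Set.mem_image_of_mem _ (Set.mem_iUnion₂.2 ⟨p, hirr, hp⟩))

theorem volume_XbarInf [Fact (0 < ∑ i, Φ i [])] (hΦ : IsHarmonic Φ) (h0 : 0 ≤ Φ) :
    volume (XbarInf Φ) = ENNReal.ofReal (2 * ((∑ i, Φ i []) / 2 - TotalGap Φ)) := by
  have hmeas : MeasurableSet (XbarInf Φ) := isClosed_closure.measurableSet
  have hsub : openGaps Φ ⊆ Set.Ioc 0 (∑ i, Φ i []) :=
    (hΦ.openGaps_subset h0).trans Set.Ioo_subset_Ioc_self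
  calc volume (XbarInf Φ)
      = volume ((fun x : ℝ => (x : AddCircle (∑ i, Φ i []))) ⁻¹' XbarInf Φ ∩
          Set.Ioc 0 (∑ i, Φ i [])) := by
        rw [AddCircle.add_projection_respects_measure _ 0 hmeas, zero_add]
    _ = volume (Set.Ioc 0 (∑ i, Φ i []) \ openGaps Φ) :=
        measure_congr (hΦ.preimage_XbarInf_ae_eq h0)
    _ = volume (Set.Ioc 0 (∑ i, Φ i [])) - volume (openGaps Φ) :=
        measure_sdiff hsub (isOpen_openGaps Φ).nullMeasurableSet
          (measure_ne_top_of_subset hsub measure_Ioc_lt_top.ne)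
    _ = ENNReal.ofReal (2 * ((∑ i, Φ i []) / 2 - TotalGap Φ)) := by
        rw [hΦ.volume_openGaps h0, Real.volume_Ioc, ← ENNReal.ofReal_sub _
          (mul_nonneg zero_le_two (hΦ.totalGap_nonneg h0))]
        ring_nf

end IsHarmonic

end Measure

end BirmanSeries

open BirmanSeries in
theorem birman_series_phenomenon_general {N : ℕ} {Φ : Fin N → List Bool → ℝ} (h0 : 0 ≤ Φ)
    (hΦ : IsHarmonic Φ) (lam : Measure (AddCircle (∑ i : Fin N, Φ i []))) [lam.IsAddHaarMeasure]
    (hmass : lam Set.univ = ENNReal.ofReal (∑ i : Fin N, Φ i [])) :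
    lam (XbarInf Φ) = ENNReal.ofReal (2 * ((∑ i : Fin N, Φ i []) / 2 - TotalGap Φ)) := by
  have hpos : 0 < ∑ i, Φ i [] := by
    rw [← ENNReal.ofReal_pos, ← hmass]
    exact isOpen_univ.measure_pos lam Set.univ_nonempty
  have : Fact (0 < ∑ i, Φ i []) := ⟨hpos⟩
  rw [eq_volume_of_measure_univ hmass, hΦ.volume_XbarInf h0]

/-- **Birman–Series phenomenon.** The Haar measure `λ` on the circle `ℝ/∂Φℤ`,
normalized to have total mass `∂Φ`, gives the set `X̄_∞` the measure
`2 · Error(Φ) = 2 (∂Φ/2 − Gap(Φ))`. -/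
theorem birman_series_phenomenon (N : ℕ) (hN : 1 ≤ N) (Φ : Fin N → List Bool → ℝ)
    (hpos : ∀ (i : Fin N) (w : List Bool), 0 < Φ i w)
    (hharm : ∀ (i : Fin N) (w : List Bool), Φ i w = Φ i (w ++ [false]) + Φ i (w ++ [true]))
    (lam : Measure (AddCircle (∑ i : Fin N, Φ i []))) [lam.IsAddHaarMeasure]
    (hmass : lam Set.univ = ENNReal.ofReal (∑ i : Fin N, Φ i [])) :
    lam (XbarInf Φ) = ENNReal.ofReal (2 * ((∑ i : Fin N, Φ i []) / 2 - TotalGap Φ)) :=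
  birman_series_phenomenon_general (fun i w => (hpos i w).le) hharm lam hmass
end
end
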